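/- arXiv:1104.5007 — 3 statements merged into one kernel-verified Lean document; each statement's English description precedes it below -/
import Mathlib

section
/- For every fixed integer k ≥ 4, with t := ⌊(k−2)/2⌋, there exists a constant C_k such that for every integer n ≥ 1 there is a family of n-permutations of size at least 2^{n·((1/t!)·α(n)^t − C_k·α(n)^{t−1})} whose VC-dimension is at most k; in other words, r_k(n) ≥ 2^{n·((1/t!)·α(n)^t − C_k·α(n)^{t−1})}. -/
/-! ## Inverse Ackermann hierarchy -/

/-- Bounded-fuel iteration counter: number of applications of `f` needed to bring `m`
down to a value `≤ 1` (assuming `f` strictly decreases on values `≥ 2`). -/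
def iterCount (f : ℕ → ℕ) : ℕ → ℕ → ℕ
  | 0, _ => 0
  | fuel + 1, m => if m ≤ 1 then 0 else 1 + iterCount f fuel (f m)

/-- The inverse Ackermann hierarchy: `alphaHier 1 m = ⌈m/2⌉`, `alphaHier d 1 = 0` for `d ≥ 2`,
and `alphaHier d m = 1 + alphaHier d (alphaHier (d-1) m)` for `m, d ≥ 2`. -/
def alphaHier : ℕ → ℕ → ℕ
  | 0, m => m
  | 1, m => (m + 1) / 2
  | d + 2, m => iterCount (alphaHier (d + 1)) m m

/-- The inverse Ackermann function `α(m) = min {k ≥ 1 : α_k(m) ≤ 3}`. -/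
noncomputable def invAck (m : ℕ) : ℕ := sInf {k : ℕ | 1 ≤ k ∧ alphaHier k m ≤ 3}

/-! ## Permutations, restrictions, VC-dimension -/

/-- The restriction of the `n`-permutation `π` to the (increasing) `k`-tuple of positions `a`
is the `k`-permutation `σ`. -/
def PermRestrictionIs {n k : ℕ} (π : Equiv.Perm (Fin n)) (a : Fin k → Fin n)
    (σ : Equiv.Perm (Fin k)) : Prop :=
  ∀ i j : Fin k, σ i < σ j ↔ π (a i) < π (a j)

/-- The `k`-tuple of positions `a` is shattered by the family `P` of `n`-permutations. -/
def Shatters {n k : ℕ} (P : Finset (Equiv.Perm (Fin n))) (a : Fin k → Fin n) : Prop :=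
  StrictMono a ∧ ∀ σ : Equiv.Perm (Fin k), ∃ π ∈ P, PermRestrictionIs π a σ

/-- The family `P` of `n`-permutations has VC-dimension at most `k`:
no `(k+1)`-tuple of positions is shattered by `P`. -/
def VCDimLE (n k : ℕ) (P : Finset (Equiv.Perm (Fin n))) : Prop :=
  ∀ a : Fin (k + 1) → Fin n, ¬ Shatters P a

/-- The number of `1`-entries of the union of the permutation matrices of a family `P`
of `n`-permutations. -/
noncomputable def permOnes {n : ℕ} (P : Finset (Equiv.Perm (Fin n))) : ℕ :=
  Nat.card {p : Fin n × Fin n // ∃ π ∈ P, π p.2 = p.1}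

/-- `v(P) = |M_P| / n`, the average number of `1`-entries per column of the union
of the permutation matrices of the family `P`. -/
noncomputable def vPerm {n : ℕ} (P : Finset (Equiv.Perm (Fin n))) : ℝ :=
  (permOnes P : ℝ) / (n : ℝ)

/-! ## (0,1)-matrices -/

/-- The number of `1`-entries of a `(0,1)`-matrix (represented as a `Bool` matrix). -/
noncomputable def matOnes {m n : ℕ} (M : Fin m → Fin n → Bool) : ℕ :=
  Nat.card {p : Fin m × Fin n // M p.1 p.2 = true}

/-- The number of `1`-entries in column `j` of a `(0,1)`-matrix. -/
noncomputable def colOnes {m n : ℕ} (M : Fin m → Fin n → Bool) (j : Fin n) : ℕ :=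
  Nat.card {i : Fin m // M i j = true}

/-- The matrix `B` contains the matrix `S`. -/
def MatContains {m n p q : ℕ} (B : Fin m → Fin n → Bool) (S : Fin p → Fin q → Bool) : Prop :=
  ∃ (r : Fin p → Fin m) (c : Fin q → Fin n), StrictMono r ∧ StrictMono c ∧
    ∀ a b, S a b = true → B (r a) (c b) = true

/-- The `s × 2` matrix `DS_s`, with a `1`-entry in (1-indexed) row `i` and column `j`
exactly when `i + j` is odd. -/
def DS (s : ℕ) : Fin s → Fin 2 → Bool :=
  fun i j => decide ((i.val + j.val) % 2 = 1)

/-- The maximum number of `1`-entries in an `n × n` matrix avoiding `S`. -/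
noncomputable def exMat {p q : ℕ} (S : Fin p → Fin q → Bool) (n : ℕ) : ℕ :=
  sSup {x : ℕ | ∃ M : Fin n → Fin n → Bool, ¬ MatContains M S ∧ matOnes M = x}

/-- An `n × n` matrix is `k`-full if some increasing `k`-tuple of columns contains
every `k`-permutation matrix. -/
def IsFull (k : ℕ) {n : ℕ} (M : Fin n → Fin n → Bool) : Prop :=
  ∃ c : Fin k → Fin n, StrictMono c ∧ ∀ σ : Equiv.Perm (Fin k),
    ∃ r : Fin k → Fin n, StrictMono r ∧ ∀ b : Fin k, M (r (σ b)) (c b) = true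

/-- `pFull k n` is the maximum number of `1`-entries in an `n × n` matrix that is
not `(k+1)`-full. -/
noncomputable def pFull (k n : ℕ) : ℕ :=
  sSup {x : ℕ | ∃ M : Fin n → Fin n → Bool, ¬ IsFull (k + 1) M ∧ matOnes M = x}

/-! ## Formations -/

/-- `M` contains a `B`-fat `(r,s)`-formation: there are an `s`-partition of the rows into
intervals (the fibers of a monotone map `g`) and `r` columns, each having at least `B`
`1`-entries in every interval. -/
def FatFormation (B r s : ℕ) {m n : ℕ} (M : Fin m → Fin n → Bool) : Prop :=
  ∃ g : Fin m → Fin s, Monotone g ∧ ∃ c : Fin r → Fin n, StrictMono c ∧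
    ∀ (j : Fin r) (i : Fin s), B ≤ Nat.card {x : Fin m // g x = i ∧ M x (c j) = true}

/-- `M` contains a doubled `(r,s)`-formation: there are an `s`-partition of the rows into
intervals and `r` columns, each having at least one `1`-entry in the first and last
interval and at least two `1`-entries in every other interval. -/
def DoubledFormation (r s : ℕ) {m n : ℕ} (M : Fin m → Fin n → Bool) : Prop :=
  ∃ g : Fin m → Fin s, Monotone g ∧ ∃ c : Fin r → Fin n, StrictMono c ∧
    ∀ (j : Fin r) (i : Fin s),
      1 ≤ Nat.card {x : Fin m // g x = i ∧ M x (c j) = true} ∧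
      (i.val ≠ 0 → i.val ≠ s - 1 → 2 ≤ Nat.card {x : Fin m // g x = i ∧ M x (c j) = true})

/-! ## The functions R, D, β -/

/-- Nivasch's hierarchy `R_s(d)` (shifted as in the paper). -/
def Rfun : ℕ → ℕ → ℕ
  | 0, _ => 0
  | 1, _ => 0
  | 2, _ => 2
  | 3, _ => 3
  | 4, d => 2 * d + 1
  | _ + 5, 0 => 0
  | _ + 5, 1 => 0
  | s + 5, 2 => 2 ^ (s + 3) + 1
  | s + 5, d + 3 =>
      2 * (Rfun (s + 4) (d + 3) - 1) + (Rfun (s + 3) (d + 3) - 1) * (Rfun (s + 5) (d + 2) - 3) + 1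
  termination_by s d => (s, d)

/-- The hierarchy `D_s(d)`. -/
def Dfun : ℕ → ℕ → ℕ
  | 0, _ => 0
  | 1, _ => 0
  | 2, _ => 2
  | _ + 3, 0 => 0
  | _ + 3, 1 => 0
  | s + 3, 2 => 2 ^ (s + 2) + 2 ^ (s + 1) - 1
  | s + 3, d + 3 =>
      2 * Dfun (s + 2) (d + 3) + (Dfun (s + 1) (d + 3) + 1) * (Rfun (s + 3) (d + 2) - 3)
        + Dfun (s + 3) (d + 2) - Rfun (s + 3) (d + 2) + 1
  termination_by s d => (s, d)

/-- `β_s(m) = D_s(α(m))`. -/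
noncomputable def betaFun (s m : ℕ) : ℕ := Dfun s (invAck m)

/-! ## Sequences: MST and formations in sequences -/

/-- The list of column indices of the `1`-entries of a row, in increasing order. -/
def rowList {n : ℕ} (row : Fin n → Bool) : List (Fin n) :=
  (List.finRange n).filter (fun j => row j)

/-- The matrix → sequence transformation: read the rows top to bottom, writing for each
`1`-entry the index of its column. -/
def MST {m n : ℕ} (M : Fin m → Fin n → Bool) : List (Fin n) :=
  ((List.finRange m).map (fun i => rowList (M i))).flatten

/-- The list `L` contains an `(r,s)`-formation as a subsequence: a concatenation of `s`
permutations of the same `r`-element set of symbols is a sublist of `L`. -/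
def IsFormationSeq {A : Type*} [DecidableEq A] (r s : ℕ) (L : List A) : Prop :=
  ∃ (T : Finset A) (F : List (List A)), T.card = r ∧ F.length = s ∧
    (∀ l ∈ F, l.Nodup ∧ l.toFinset = T) ∧ List.Sublist F.flatten L



def SCert {g m : ℕ} {L : Type} (blk : Fin g → Fin m → L) (s : ℕ) (a b : L)
    (h : Fin g → Fin m → ℕ) : Prop :=
  (∀ i j, blk i j = a → h i j % 2 = 0) ∧ (∀ i j, blk i j = b → h i j % 2 = 1) ∧
  (∀ i j, (blk i j = a ∨ blk i j = b) → h i j ≤ s) ∧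
  (∀ i j i' j', (blk i j = a ∨ blk i j = b) → (blk i' j' = a ∨ blk i' j' = b) →
    (i < i' ∨ (i = i' ∧ j < j')) → h i j ≤ h i' j')

def SNest {g m : ℕ} {L : Type} (blk : Fin g → Fin m → L) : Prop :=
  ∀ (i0 : Fin g) (j0 j0' : Fin m), j0 < j0' →
    (∀ i i' j j', i ≤ i' → i' < i0 → blk i j = blk i0 j0 → blk i' j' = blk i0 j0' → False) ∧
    (∀ i i' j j', i ≤ i' → i0 < i → blk i j = blk i0 j0' → blk i' j' = blk i0 j0 → False)

def SOcc {g m : ℕ} {L : Type} (μ : ℕ) (blk : Fin g → Fin m → L) : Prop :=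
  ∀ a, ∃ o : Fin μ → Fin g × Fin m, Function.Injective o ∧ ∀ u, blk (o u).1 (o u).2 = a

/-- strong structure: usable both as the outer and as the inner sequence -/
structure SStrong {g m : ℕ} {L : Type} (s μ : ℕ) (blk : Fin g → Fin m → L) : Prop where
  inj : ∀ i, Function.Injective (blk i)
  occ : SOcc μ blk
  cert : ∀ a b, a ≠ b → ∃ h, SCert blk s a b h ∨ SCert blk s b a h
  nest : SNest blk

/-- weak structure: letters are sorted by first occurrence -/
structure SWeak {g m N : ℕ} (s μ : ℕ) (blk : Fin g → Fin m → Fin N) : Prop where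
  inj : ∀ i, Function.Injective (blk i)
  occ : SOcc μ blk
  cert : ∀ a b, a < b → ∃ h, SCert blk s a b h

theorem SStrong.map {g m : ℕ} {L L' : Type} {s μ : ℕ} {blk : Fin g → Fin m → L}
    (hS : SStrong s μ blk) (e : L ≃ L') : SStrong s μ (fun i j => e (blk i j)) := by
  refine ⟨fun i => e.injective.comp (hS.inj i), ?_, ?_, ?_⟩
  · intro a
    obtain ⟨o, ho, ho'⟩ := hS.occ (e.symm a)
    exact ⟨o, ho, fun u => by simp [ho']⟩
  · intro a b hab
    obtain ⟨h, hh⟩ := hS.cert (e.symm a) (e.symm b) (by simpa using hab)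
    refine ⟨h, ?_⟩
    simpa only [SCert, Equiv.eq_symm_apply] using hh
  · intro i0 j0 j0' hj
    simpa using hS.nest i0 j0 j0' hj

theorem sbase_zero (s μ : ℕ) : SStrong s μ (fun (_ : Fin 1) (j : Fin 0) => j) := by
  refine ⟨fun i a => a.elim0, fun a => a.elim0, fun a => a.elim0, fun i a => a.elim0⟩

theorem sbase_one (s m : ℕ) (hs : 1 ≤ s) : SStrong s 1 (fun (_ : Fin 1) (j : Fin m) => j) := by
  refine ⟨fun i a b h => h, fun a => ⟨fun _ => (0, a), ?_, fun _ => rfl⟩, ?_, ?_⟩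
  · intro x y _; exact Subsingleton.elim _ _
  · intro a b hab
    refine ⟨fun _ j => if a < b then (if j = b then 1 else 0) else (if j = a then 1 else 0), ?_⟩
    unfold SCert
    rcases lt_or_gt_of_ne hab with h | h
    · left
      grind
    · right
      grind
  · intro i0 j0 j0' hj
    constructor
    · intro i i' j j' _ h; omega
    · intro i i' j j' _ h; omega

theorem sbase_two (m : ℕ) :
    SWeak 2 2 (fun (i : Fin 2) (j : Fin m) => if i = 0 then j else Fin.rev j) := by
  refine ⟨?_, ?_, ?_⟩
  · intro i
    by_cases hi : i = 0
    · simp only [hi, if_true]; exact fun a b h => h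
    · simp only [hi, if_false]; exact Fin.rev_injective
  · intro a
    refine ⟨fun u => (u, if u = 0 then a else Fin.rev a), ?_, ?_⟩
    · intro x y h; exact (Prod.ext_iff.1 h).1
    · intro u
      by_cases hu : u = 0 <;> simp [hu]
  · intro a b hab
    refine ⟨fun i j => if i = 0 then (if j = a then 0 else 1) else (if Fin.rev j = a then 2 else 1), ?_⟩
    have h2 : ∀ i : Fin 2, i = 0 ∨ i = 1 := by decide
    refine ⟨?_, ?_, ?_, ?_⟩
    · intro i j h; rcases h2 i with rfl | rfl <;> simp_all
    · intro i j h; rcases h2 i with rfl | rfl <;> simp_all <;> grind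
    · intro i j h; rcases h2 i with rfl | rfl <;> simp_all <;> grind
    · intro i j i' j' h h' hl
      rcases h2 i with rfl | rfl <;> rcases h2 i' with rfl | rfl
      · simp at *; grind
      · simp at *; grind
      · simp at *
      · simp at *
        split_ifs with h3 h4
        · omega
        · exfalso
          have h5 : Fin.rev j' = b := by tauto
          have h6 : Fin.rev j' < Fin.rev j := by simpa using hl
          rw [h3, h5] at h6
          exact lt_asymm hab h6
        · omega
        · omega


def scomb {g1 g2 f m N1 N2 N3 G : ℕ} (p : Fin G → Fin g1 × Fin g2 × Fin f)
    (blk1 : Fin g1 → Fin N2 → Fin N1) (blk2 : Fin g2 → Fin f → Fin N2)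
    (blk3 : Fin f → Fin m → Fin N3) (i : Fin G) (j : Fin (m + 1)) :
    Fin N1 ⊕ (Fin g1 × Fin g2 × Fin N3) :=
  if h : j.val < m then Sum.inr ((p i).1, (p i).2.1, blk3 (p i).2.2 ⟨j.val, h⟩)
  else Sum.inl (blk1 (p i).1 (blk2 (p i).2.1 (p i).2.2))

section
variable {g1 g2 f m N1 N2 N3 G : ℕ} {p : Fin G → Fin g1 × Fin g2 × Fin f}
    {blk1 : Fin g1 → Fin N2 → Fin N1} {blk2 : Fin g2 → Fin f → Fin N2}
    {blk3 : Fin f → Fin m → Fin N3}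

theorem scomb_inl {i : Fin G} {j : Fin (m + 1)} {x : Fin N1} :
    scomb p blk1 blk2 blk3 i j = Sum.inl x ↔
      j.val = m ∧ blk1 (p i).1 (blk2 (p i).2.1 (p i).2.2) = x := by
  unfold scomb
  have := j.isLt
  split_ifs with h
  · simp; omega
  · simp; omega

theorem scomb_inr {i : Fin G} {j : Fin (m + 1)} {a : Fin g1} {b : Fin g2} {x : Fin N3} :
    scomb p blk1 blk2 blk3 i j = Sum.inr (a, b, x) ↔
      ∃ h : j.val < m, (p i).1 = a ∧ (p i).2.1 = b ∧ blk3 (p i).2.2 ⟨j.val, h⟩ = x := by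
  unfold scomb
  split_ifs with h
  · simp [h]
  · simp [h]

def PLex {g1 g2 f G : ℕ} (p : Fin G → Fin g1 × Fin g2 × Fin f) : Prop :=
  ∀ i i', i < i' ↔ ((p i).1 < (p i').1 ∨ ((p i).1 = (p i').1 ∧
    ((p i).2.1 < (p i').2.1 ∨ ((p i).2.1 = (p i').2.1 ∧ (p i).2.2 < (p i').2.2))))

theorem scomb_inj (h3 : ∀ i, Function.Injective (blk3 i)) (i : Fin G) :
    Function.Injective (scomb p blk1 blk2 blk3 i) := by
  intro j j' h
  unfold scomb at h
  split_ifs at h with h1 h2 h2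
  · simp only [Sum.inr.injEq, Prod.mk.injEq, true_and] at h
    have := h3 _ h
    simp only [Fin.mk.injEq] at this
    exact Fin.ext this
  · exact Fin.ext (by omega)

theorem scomb_occ {μ1 μ2 : ℕ} (hp : Function.Bijective p)
    (h1 : SOcc μ1 blk1) (h2 : SOcc μ2 blk2) (h3 : SOcc (μ1 * μ2) blk3) :
    SOcc (μ1 * μ2) (scomb p blk1 blk2 blk3) := by
  let e := Equiv.ofBijective p hp
  have he : ∀ x, p (e.symm x) = x := fun x => e.apply_symm_apply x
  rintro (x | ⟨a, b, x⟩)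
  · obtain ⟨o1, i1, o1'⟩ := h1 x
    choose o2 i2 o2' using h2
    refine ⟨fun u => (e.symm ((o1 (finProdFinEquiv.symm u).1).1,
      o2 (o1 (finProdFinEquiv.symm u).1).2 (finProdFinEquiv.symm u).2), Fin.last m), ?_, ?_⟩
    · intro u v huv
      simp only [Prod.mk.injEq, and_true, EmbeddingLike.apply_eq_iff_eq] at huv
      obtain ⟨ha, hb⟩ := huv
      have hc : (o1 (finProdFinEquiv.symm u).1).2 = (o1 (finProdFinEquiv.symm v).1).2 := by
        rw [← o2' (o1 (finProdFinEquiv.symm u).1).2 (finProdFinEquiv.symm u).2, hb, o2']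
      have hd := i1 (Prod.ext ha hc)
      rw [hc] at hb
      have he := i2 _ hb
      exact finProdFinEquiv.symm.injective (Prod.ext hd he)
    · intro u
      rw [scomb_inl]
      refine ⟨rfl, ?_⟩
      simp only [he]
      rw [o2', o1']
  · obtain ⟨o, io, o'⟩ := h3 x
    refine ⟨fun u => (e.symm (a, b, (o u).1), (o u).2.castSucc), ?_, ?_⟩
    · intro u v huv
      simp only [Prod.mk.injEq, true_and, EmbeddingLike.apply_eq_iff_eq] at huv
      apply io
      refine Prod.ext huv.1 ?_
      simpa using huv.2
    · intro u
      rw [scomb_inr]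
      simp only [he]
      exact ⟨(o u).2.isLt, trivial, trivial, o' u⟩

theorem scomb_nest (hp : PLex p) (i1 : ∀ i, Function.Injective (blk1 i))
    (i2 : ∀ i, Function.Injective (blk2 i)) (h3 : SNest blk3) :
    SNest (scomb p blk1 blk2 blk3) := by
  intro i0 j0 j0' hj
  have hj0 : j0.val < m := by have := j0'.isLt; have : j0.val < j0'.val := hj; omega
  have e0 : scomb p blk1 blk2 blk3 i0 j0 =
    Sum.inr ((p i0).1, (p i0).2.1, blk3 (p i0).2.2 ⟨j0.val, hj0⟩) := by simp [scomb, hj0]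
  have key : ∀ i i' : Fin G, i ≤ i' ↔ ¬ i' < i := fun i i' => not_lt.symm
  rw [e0]
  by_cases hj0' : j0'.val < m
  · have e0' : scomb p blk1 blk2 blk3 i0 j0' =
      Sum.inr ((p i0).1, (p i0).2.1, blk3 (p i0).2.2 ⟨j0'.val, hj0'⟩) := by simp [scomb, hj0']
    rw [e0']
    have hn := h3 (p i0).2.2 ⟨j0.val, hj0⟩ ⟨j0'.val, hj0'⟩ hj
    simp only [scomb_inr]
    constructor
    · rintro i i' j j' hi hi' ⟨hj1, ha, hb, hc⟩ ⟨hj2, ha', hb', hc'⟩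
      refine hn.1 _ _ _ _ ?_ ?_ hc hc'
      · rw [key, hp] at hi; by_contra hcon; apply hi; grind
      · rw [hp] at hi'; grind
    · rintro i i' j j' hi hi' ⟨hj1, ha, hb, hc⟩ ⟨hj2, ha', hb', hc'⟩
      refine hn.2 _ _ _ _ ?_ ?_ hc hc'
      · rw [key, hp] at hi; by_contra hcon; apply hi; grind
      · rw [hp] at hi'; grind
  · have e0' : scomb p blk1 blk2 blk3 i0 j0' =
      Sum.inl (blk1 (p i0).1 (blk2 (p i0).2.1 (p i0).2.2)) := by simp [scomb, hj0']
    rw [e0']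
    simp only [scomb_inr, scomb_inl]
    constructor
    · rintro i i' j j' hi hi' ⟨hj1, ha, hb, hc⟩ ⟨hj2, ha'⟩
      rw [key, hp] at hi
      rw [hp] at hi'
      have q1 : (p i').1 = (p i0).1 := by grind
      have q2 : (p i').2.1 = (p i0).2.1 := by grind
      rw [q1, q2] at ha'
      have := i2 _ (i1 _ ha')
      grind
    · rintro i i' j j' hi hi' ⟨hj2, ha'⟩ ⟨hj1, ha, hb, hc⟩
      rw [key, hp] at hi
      rw [hp] at hi'
      have q1 : (p i).1 = (p i0).1 := by grind
      have q2 : (p i).2.1 = (p i0).2.1 := by grind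
      rw [q1, q2] at ha'
      have := i2 _ (i1 _ ha')
      grind

theorem scomb_cert_rr (hp : PLex p) {s : ℕ} (hs : 1 ≤ s)
    (h3 : ∀ a b, a ≠ b → ∃ h, SCert blk3 s a b h ∨ SCert blk3 s b a h)
    (a : Fin g1) (b : Fin g2) (x : Fin N3) (a' : Fin g1) (b' : Fin g2) (x' : Fin N3)
    (hne : (a, b, x) ≠ (a', b', x')) :
    ∃ h, SCert (scomb p blk1 blk2 blk3) s (Sum.inr (a, b, x)) (Sum.inr (a', b', x')) h ∨
      SCert (scomb p blk1 blk2 blk3) s (Sum.inr (a', b', x')) (Sum.inr (a, b, x)) h := by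
  by_cases hab : a = a' ∧ b = b'
  · obtain ⟨rfl, rfl⟩ := hab
    have key : ∀ x x' h, SCert blk3 s x x' h →
        SCert (scomb p blk1 blk2 blk3) s (Sum.inr (a, b, x)) (Sum.inr (a, b, x'))
          (fun i j => if hj : j.val < m then h (p i).2.2 ⟨j.val, hj⟩ else 0) := by
      rintro x x' h ⟨c1, c2, c3, c4⟩
      refine ⟨?_, ?_, ?_, ?_⟩
      · intro i j hh
        obtain ⟨hj, h1, h2, h4⟩ := scomb_inr.1 hh
        simp only [hj, dif_pos]
        exact c1 _ _ h4
      · intro i j hh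
        obtain ⟨hj, h1, h2, h4⟩ := scomb_inr.1 hh
        simp only [hj, dif_pos]
        exact c2 _ _ h4
      · intro i j hh
        simp only [scomb_inr] at hh
        have hj : j.val < m := by grind
        simp only [hj, dif_pos]
        exact c3 _ _ (by grind)
      · intro i j i' j' hh hh' hl
        simp only [scomb_inr] at hh hh'
        have hj : j.val < m := by grind
        have hj' : j'.val < m := by grind
        simp only [hj, hj', dif_pos]
        refine c4 _ _ _ _ (by grind) (by grind) ?_
        rcases hl with hl | ⟨rfl, hl⟩
        · rw [hp] at hl
          left
          grind
        · right
          exact ⟨rfl, hl⟩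
    obtain ⟨h, hh⟩ := h3 x x' (by grind)
    rcases hh with hh | hh
    · exact ⟨_, Or.inl (key _ _ _ hh)⟩
    · exact ⟨_, Or.inr (key _ _ _ hh)⟩
  · have key : ∀ (a : Fin g1) (b : Fin g2) (x : Fin N3) (a' : Fin g1) (b' : Fin g2) (x' : Fin N3),
        (a < a' ∨ (a = a' ∧ b < b')) →
        SCert (scomb p blk1 blk2 blk3) s (Sum.inr (a, b, x)) (Sum.inr (a', b', x'))
          (fun i _ => if (p i).1 = a ∧ (p i).2.1 = b then 0 else 1) := by
      intro a b x a' b' x' hlt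
      refine ⟨?_, ?_, ?_, ?_⟩
      · intro i j hh
        obtain ⟨hj, h1, h2, h4⟩ := scomb_inr.1 hh
        simp [h1, h2]
      · intro i j hh
        obtain ⟨hj, h1, h2, h4⟩ := scomb_inr.1 hh
        have hn : ¬ ((p i).1 = a ∧ (p i).2.1 = b) := by
          rintro ⟨w1, w2⟩
          rw [← h1, ← h2, w1, w2] at hlt
          rcases hlt with w | ⟨-, w⟩ <;> exact lt_irrefl _ w
        simp [hn]
      · intro i j hh
        dsimp only
        split_ifs <;> omega
      · intro i j i' j' hh hh' hl
        simp only [scomb_inr] at hh hh'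
        dsimp only
        split_ifs with q1 q2 q2
        · omega
        · omega
        · exfalso
          rw [hp] at hl
          grind
        · omega
    by_cases hlt : (a < a' ∨ (a = a' ∧ b < b'))
    · exact ⟨_, Or.inl (key _ _ _ _ _ _ hlt)⟩
    · refine ⟨_, Or.inr (key a' b' x' a b x ?_)⟩
      grind

theorem scomb_cert_lr (hp : PLex p) {s : ℕ} (hs : 4 ≤ s)
    (i1 : ∀ i, Function.Injective (blk1 i)) (i2 : ∀ i, Function.Injective (blk2 i))
    (a : Fin g1) (b : Fin g2) (x : Fin N3) (y : Fin N1) :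
    ∃ h, SCert (scomb p blk1 blk2 blk3) s (Sum.inl y) (Sum.inr (a, b, x)) h := by
  classical
  refine ⟨fun i j => if j.val < m then
      (if ∃ c, c < (p i).2.2 ∧ blk1 a (blk2 b c) = y then 3 else 1)
    else if (p i).1 < a ∨ ((p i).1 = a ∧ (p i).2.1 < b) then 0
      else if (p i).1 = a ∧ (p i).2.1 = b then 2 else 4, ?_, ?_, ?_, ?_⟩
  · intro i j hh
    rw [scomb_inl] at hh
    dsimp only
    rw [if_neg (by omega)]
    split_ifs <;> rfl
  · intro i j hh
    rw [scomb_inr] at hh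
    dsimp only
    rw [if_pos (by grind)]
    split_ifs <;> rfl
  · intro i j hh
    dsimp only
    split_ifs <;> omega
  · intro i j i' j' hh hh' hl
    simp only [scomb_inr, scomb_inl] at hh hh'
    rw [hp] at hl
    have uniq : ∀ c c', blk1 a (blk2 b c) = y → blk1 a (blk2 b c') = y → c = c' := by
      intro c c' q q'
      exact i2 _ (i1 _ (q.trans q'.symm))
    dsimp only
    rcases hh with ⟨hj, hy⟩ | ⟨hj, ha, hb, hx⟩ <;> rcases hh' with ⟨hj', hy'⟩ | ⟨hj', ha', hb', hx'⟩
    · have n1 : ¬ (j.val < m) := by omega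
      have n2 : ¬ (j'.val < m) := by omega
      simp only [n1, n2, if_false]
      clear uniq
      split_ifs <;> omega
    · have n1 : ¬ (j.val < m) := by omega
      simp only [n1, hj', if_false, if_true]
      by_cases q : (p i).1 < a ∨ ((p i).1 = a ∧ (p i).2.1 < b)
      · simp [q]
      · have q1 : (p i).1 = a ∧ (p i).2.1 = b := by grind
        have q2 : ∃ c, c < (p i').2.2 ∧ blk1 a (blk2 b c) = y := by
          refine ⟨(p i).2.2, by grind, ?_⟩
          rw [← hy, q1.1, q1.2]
        rw [if_neg q, if_pos q1, if_pos q2]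
        omega
    · have n2 : ¬ (j'.val < m) := by omega
      simp only [n2, hj, if_false, if_true]
      have q : ¬ ((p i').1 < a ∨ ((p i').1 = a ∧ (p i').2.1 < b)) := by grind
      rw [if_neg q]
      by_cases q1 : (p i').1 = a ∧ (p i').2.1 = b
      · have q2 : ¬ ∃ c, c < (p i).2.2 ∧ blk1 a (blk2 b c) = y := by
          rintro ⟨c, hc, hc'⟩
          have := uniq c (p i').2.2 hc' (by rw [← hy', q1.1, q1.2])
          grind
        rw [if_neg q2, if_pos q1]
        omega
      · rw [if_neg q1]
        split_ifs <;> omega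
    · simp only [hj, hj', if_true]
      split_ifs with q1 q2 q2
      · omega
      · exfalso
        obtain ⟨c, hc, hc'⟩ := q1
        exact q2 ⟨c, by grind, hc'⟩
      · omega
      · omega

set_option maxHeartbeats 1000000 in
theorem scomb_cert_ll (hp : PLex p) {s : ℕ} (hs : s % 2 = 0)
    (i1 : ∀ i, Function.Injective (blk1 i))
    (hc1 : ∀ a b, a ≠ b → ∃ h, SCert blk1 (s + 2) a b h ∨ SCert blk1 (s + 2) b a h)
    (hn1 : SNest blk1)
    (hc2 : ∀ a b, a < b → ∃ h, SCert blk2 s a b h)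
    (x y : Fin N1) (hxy : x ≠ y) :
    ∃ h, SCert (scomb p blk1 blk2 blk3) (s + 2) (Sum.inl x) (Sum.inl y) h ∨
      SCert (scomb p blk1 blk2 blk3) (s + 2) (Sum.inl y) (Sum.inl x) h := by
  by_cases hsh : ∃ i j j', blk1 i j = x ∧ blk1 i j' = y
  · have key : ∀ (x y : Fin N1) (i0 : Fin g1) (j0 j0' : Fin N2), x ≠ y → j0 < j0' →
        blk1 i0 j0 = x → blk1 i0 j0' = y →
        ∃ h, SCert (scomb p blk1 blk2 blk3) (s + 2) (Sum.inl y) (Sum.inl x) h := by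
      intro x y i0 j0 j0' hxy hj hx hy
      obtain ⟨h2, c1, c2, c3, c4⟩ := hc2 j0 j0' hj
      obtain ⟨n1, n2⟩ := hn1 i0 j0 j0' hj
      rw [hx, hy] at n1 n2
      have u1 : ∀ j, blk1 i0 j = x → j = j0 := fun j h => i1 _ (h.trans hx.symm)
      have u2 : ∀ j, blk1 i0 j = y → j = j0' := fun j h => i1 _ (h.trans hy.symm)
      refine ⟨fun i _ => if (p i).1 < i0 then
          (if blk1 (p i).1 (blk2 (p i).2.1 (p i).2.2) = x then 1 else 0)
        else if (p i).1 = i0 then 1 + h2 (p i).2.1 (p i).2.2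
        else (if blk1 (p i).1 (blk2 (p i).2.1 (p i).2.2) = x then s + 1 else s + 2), ?_, ?_, ?_, ?_⟩
      · intro i j hh
        rw [scomb_inl] at hh
        have hb : blk1 (p i).1 (blk2 (p i).2.1 (p i).2.2) ≠ x := by grind
        dsimp only
        rw [if_neg hb, if_neg hb]
        split_ifs with q1 q2
        · rfl
        · have := c2 (p i).2.1 (p i).2.2 (u2 _ (by rw [← hh.2, q2]))
          omega
        · omega
      · intro i j hh
        rw [scomb_inl] at hh
        dsimp only
        rw [if_pos hh.2, if_pos hh.2]
        split_ifs with q1 q2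
        · rfl
        · have := c1 (p i).2.1 (p i).2.2 (u1 _ (by rw [← hh.2, q2]))
          omega
        · omega
      · intro i j hh
        rw [scomb_inl, scomb_inl] at hh
        dsimp only
        by_cases q2 : (p i).1 = i0
        · rw [if_neg (by rw [q2]; exact lt_irrefl _), if_pos q2]
          rw [q2] at hh
          have := c3 (p i).2.1 (p i).2.2 (by grind)
          omega
        · split_ifs <;> omega
      · intro i j i' j' hh hh' hl
        rw [scomb_inl, scomb_inl] at hh hh'
        dsimp only
        have hl' : i < i' := by
          rcases hl with hl | hl
          · exact hl
          · exfalso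
            have : j.val < j'.val := hl.2
            omega
        rw [hp] at hl'
        have z1 : blk1 (p i).1 (blk2 (p i).2.1 (p i).2.2) = x ∨
          blk1 (p i).1 (blk2 (p i).2.1 (p i).2.2) = y := by tauto
        have z2 : blk1 (p i').1 (blk2 (p i').2.1 (p i').2.2) = x ∨
          blk1 (p i').1 (blk2 (p i').2.1 (p i').2.2) = y := by tauto
        have hle1 : (p i).1 ≤ (p i').1 := by
          rcases hl' with h | h
          · exact h.le
          · exact h.1.le
        rcases lt_trichotomy (p i).1 i0 with q | q | q
        · rw [if_pos q]
          rcases lt_trichotomy (p i').1 i0 with q' | q' | q'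
          · rw [if_pos q']
            have := n1 _ _ (blk2 (p i).2.1 (p i).2.2) (blk2 (p i').2.1 (p i').2.2) hle1 q'
            split_ifs with w1 w2 w2
            · exact le_rfl
            · exact (this w1 (z2.resolve_left w2)).elim
            · exact Nat.zero_le _
            · exact le_rfl
          · rw [if_neg (show ¬ (p i').1 < i0 by rw [q']; exact lt_irrefl _), if_pos q']
            split_ifs <;> omega
          · rw [if_neg (not_lt.2 q'.le), if_neg q'.ne']
            split_ifs <;> omega
        · rw [if_neg (show ¬ (p i).1 < i0 by rw [q]; exact lt_irrefl _), if_pos q]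
          have b1 : blk2 (p i).2.1 (p i).2.2 = j0 ∨ blk2 (p i).2.1 (p i).2.2 = j0' := by
            rw [q] at z1; exact z1.imp (u1 _) (u2 _)
          have b2 := c3 _ _ b1
          rcases lt_trichotomy (p i').1 i0 with q' | q' | q'
          · exfalso; rw [q] at hle1; exact absurd q' (not_lt.2 hle1)
          · rw [if_neg (show ¬ (p i').1 < i0 by rw [q']; exact lt_irrefl _), if_pos q']
            have b1' : blk2 (p i').2.1 (p i').2.2 = j0 ∨ blk2 (p i').2.1 (p i').2.2 = j0' := by
              rw [q'] at z2; exact z2.imp (u1 _) (u2 _)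
            have := c4 _ _ _ _ b1 b1' (by grind)
            omega
          · rw [if_neg (not_lt.2 q'.le), if_neg q'.ne']
            split_ifs <;> omega
        · rw [if_neg (not_lt.2 q.le), if_neg q.ne']
          have q' := lt_of_lt_of_le q hle1
          rw [if_neg (not_lt.2 q'.le), if_neg q'.ne']
          have := n2 _ _ (blk2 (p i).2.1 (p i).2.2) (blk2 (p i').2.1 (p i').2.2) hle1 q
          split_ifs with w1 w2 w2
          · exact le_rfl
          · omega
          · exact (this (z1.resolve_left w1) w2).elim
          · exact le_rfl
    obtain ⟨i, j, j', hx, hy⟩ := hsh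
    rcases lt_trichotomy j j' with h | h | h
    · obtain ⟨h, hh⟩ := key x y i j j' hxy h hx hy
      exact ⟨h, Or.inr hh⟩
    · exact absurd (by rw [← hx, ← hy, h]) hxy
    · obtain ⟨h, hh⟩ := key y x i j' j hxy.symm h hy hx
      exact ⟨h, Or.inl hh⟩
  · have key : ∀ (x y : Fin N1) h, x ≠ y → (¬ ∃ i j j', blk1 i j = x ∧ blk1 i j' = y) →
        SCert blk1 (s + 2) x y h →
        SCert (scomb p blk1 blk2 blk3) (s + 2) (Sum.inl x) (Sum.inl y)
          (fun i _ => h (p i).1 (blk2 (p i).2.1 (p i).2.2)) := by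
      rintro x y h hxy hsh ⟨c1, c2, c3, c4⟩
      refine ⟨?_, ?_, ?_, ?_⟩
      · intro i j hh
        exact c1 _ _ (scomb_inl.1 hh).2
      · intro i j hh
        exact c2 _ _ (scomb_inl.1 hh).2
      · intro i j hh
        rw [scomb_inl, scomb_inl] at hh
        exact c3 _ _ (by tauto)
      · intro i j i' j' hh hh' hl
        rw [scomb_inl, scomb_inl] at hh hh'
        have hl' : i < i' := by
          rcases hl with hl | hl
          · exact hl
          · exfalso
            have : j.val < j'.val := hl.2
            omega
        rw [hp] at hl'
        have z1 : blk1 (p i).1 (blk2 (p i).2.1 (p i).2.2) = x ∨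
          blk1 (p i).1 (blk2 (p i).2.1 (p i).2.2) = y := by tauto
        have z2 : blk1 (p i').1 (blk2 (p i').2.1 (p i').2.2) = x ∨
          blk1 (p i').1 (blk2 (p i').2.1 (p i').2.2) = y := by tauto
        rcases hl' with q | ⟨q, -⟩
        · exact c4 _ _ _ _ z1 z2 (Or.inl q)
        · have : blk1 (p i).1 (blk2 (p i).2.1 (p i).2.2) =
              blk1 (p i').1 (blk2 (p i').2.1 (p i').2.2) := by
            rcases z1 with z1 | z1 <;> rcases z2 with z2 | z2
            · rw [z1, z2]
            · exact absurd ⟨_, _, _, z1, (by rw [q]; exact z2)⟩ hsh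
            · exact absurd ⟨_, _, _, z2, (by rw [← q]; exact z1)⟩ hsh
            · rw [z1, z2]
          rw [q] at this
          have := i1 _ this
          dsimp only
          rw [q, this]
    obtain ⟨h, hh⟩ := hc1 x y hxy
    rcases hh with hh | hh
    · exact ⟨_, Or.inl (key x y h hxy hsh hh)⟩
    · refine ⟨_, Or.inr (key y x h hxy.symm ?_ hh)⟩
      rintro ⟨i, j, j', h, h'⟩
      exact hsh ⟨i, j', j, h', h⟩

end

theorem exists_plex (g1 g2 f : ℕ) : ∃ p : Fin (g1 * (g2 * f)) → Fin g1 × Fin g2 × Fin f,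
    Function.Bijective p ∧ PLex p := by
  have hc : Fintype.card (Fin g1 ×ₗ (Fin g2 ×ₗ Fin f)) = g1 * (g2 * f) := by
    change Fintype.card (Fin g1 × (Fin g2 × Fin f)) = _
    simp
  let e := Fintype.orderIsoFinOfCardEq _ hc
  refine ⟨fun i => ((ofLex (e i)).1, (ofLex (ofLex (e i)).2).1, (ofLex (ofLex (e i)).2).2), ?_, ?_⟩
  · constructor
    · intro i i' h
      simp only [Prod.mk.injEq] at h
      apply e.injective
      apply ofLex.injective
      refine Prod.ext h.1 (ofLex.injective (Prod.ext h.2.1 h.2.2))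
    · rintro ⟨a, b, c⟩
      refine ⟨e.symm (toLex (a, toLex (b, c))), ?_⟩
      simp
  · intro i i'
    rw [← e.lt_iff_lt, Prod.Lex.lt_iff, Prod.Lex.lt_iff]

theorem scombine {g1 g2 f m N1 N2 N3 s μ1 μ2 : ℕ} (hs : s % 2 = 0) (hs2 : 2 ≤ s)
    {blk1 : Fin g1 → Fin N2 → Fin N1} {blk2 : Fin g2 → Fin f → Fin N2}
    {blk3 : Fin f → Fin m → Fin N3}
    (h1 : SStrong (s + 2) μ1 blk1) (h2 : SWeak s μ2 blk2) (h3 : SStrong (s + 2) (μ1 * μ2) blk3) :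
    ∃ blk : Fin (g1 * (g2 * f)) → Fin (m + 1) → Fin (N1 + g1 * (g2 * N3)),
      SStrong (s + 2) (μ1 * μ2) blk := by
  obtain ⟨p, hpb, hp⟩ := exists_plex g1 g2 f
  have hS : SStrong (s + 2) (μ1 * μ2) (scomb p blk1 blk2 blk3) := by
    refine ⟨scomb_inj h3.inj, scomb_occ hpb h1.occ h2.occ h3.occ, ?_,
      scomb_nest hp h1.inj h2.inj h3.nest⟩
    rintro (x | ⟨a, b, x⟩) (y | ⟨a', b', y⟩) hne
    · exact scomb_cert_ll hp hs h1.inj h1.cert h1.nest h2.cert x y (by grind)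
    · obtain ⟨h, hh⟩ := scomb_cert_lr (blk3 := blk3) hp (s := s + 2) (by omega) h1.inj h2.inj a' b' y x
      exact ⟨h, Or.inl hh⟩
    · obtain ⟨h, hh⟩ := scomb_cert_lr (blk3 := blk3) hp (s := s + 2) (by omega) h1.inj h2.inj a b x y
      exact ⟨h, Or.inr hh⟩
    · exact scomb_cert_rr hp (by omega) h3.cert a b x a' b' y (by grind)
  have e : (Fin N1 ⊕ (Fin g1 × Fin g2 × Fin N3)) ≃ Fin (N1 + g1 * (g2 * N3)) :=
    Fintype.equivFinOfCardEq (by simp)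
  exact ⟨_, hS.map e⟩

theorem sstrong_weak {g m N s μ : ℕ} (hμ : 1 ≤ μ) {blk : Fin g → Fin m → Fin N}
    (hS : SStrong s μ blk) : ∃ blk' : Fin g → Fin m → Fin N, SWeak s μ blk' := by
  classical
  have hex : ∀ a : Fin N, ∃ q : Fin g ×ₗ Fin m, blk (ofLex q).1 (ofLex q).2 = a ∧
      ∀ i j, blk i j = a → q ≤ toLex (i, j) := by
    intro a
    obtain ⟨o, -, ho⟩ := hS.occ a
    let S : Finset (Fin g ×ₗ Fin m) := Finset.univ.filter (fun q => blk (ofLex q).1 (ofLex q).2 = a)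
    have hne : S.Nonempty := ⟨toLex (o ⟨0, hμ⟩), by simp [S, ho]⟩
    obtain ⟨q, hq, hq'⟩ := S.exists_min_image id hne
    refine ⟨q, by simpa [S] using hq, fun i j h => ?_⟩
    exact hq' (toLex (i, j)) (by simp [S, h])
  choose fst hf hfm using hex
  have hfi : Function.Injective fst := by
    intro a b h
    rw [← hf a, ← hf b, h]
  let e := Tuple.sort fst
  have hem : StrictMono (fst ∘ e) :=
    (Tuple.monotone_sort fst).strictMono_of_injective (hfi.comp e.injective)
  have hS' := hS.map e.symm
  refine ⟨_, hS'.inj, hS'.occ, ?_⟩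
  intro a b hab
  have hlt : fst (e a) < fst (e b) := hem hab
  obtain ⟨h, hh⟩ := hS.cert (e a) (e b) (fun h => hab.ne (e.injective h))
  have conv : ∀ h, SCert blk s (e a) (e b) h →
      SCert (fun i j => e.symm (blk i j)) s a b h := by
    intro h hh
    simpa only [SCert, Equiv.symm_apply_eq] using hh
  rcases hh with hh | hh
  · exact ⟨h, conv _ hh⟩
  · refine ⟨fun i j => h i j - 1, conv _ ?_⟩
    obtain ⟨c1, c2, c3, c4⟩ := hh
    have hb : ∀ i j, blk i j = e b → 2 ≤ h i j := by
      intro i j hij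
      have h1 := lt_of_lt_of_le hlt (hfm (e b) i j hij)
      rw [Prod.Lex.lt_iff] at h1
      have h2 := c4 _ _ _ _ (Or.inr (hf (e a))) (Or.inl hij) h1
      have h3 := c2 _ _ (hf (e a))
      have h4 := c1 _ _ hij
      omega
    refine ⟨?_, ?_, ?_, ?_⟩
    · intro i j hij
      have := c2 _ _ hij
      dsimp only; omega
    · intro i j hij
      have := c1 _ _ hij
      have := hb _ _ hij
      dsimp only; omega
    · intro i j hij
      have := c3 i j hij.symm
      dsimp only; omega
    · intro i j i' j' hij hij' hl
      have := c4 i j i' j' hij.symm hij'.symm hl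
      dsimp only; omega


def sexp (t k : ℕ) : ℕ := 2 ^ Nat.choose (k + t - 1) t

theorem sexp_zero (k : ℕ) : sexp 0 k = 2 := by simp [sexp]
theorem sexp_base (t : ℕ) : sexp (t + 1) 0 = 1 := by simp [sexp]
theorem sexp_succ (t k : ℕ) : sexp (t + 1) (k + 1) = sexp (t + 1) k * sexp t (k + 1) := by
  unfold sexp
  rw [← pow_add]
  congr 1
  have h1 : k + 1 + (t + 1) - 1 = (k + t) + 1 := by omega
  have h2 : k + (t + 1) - 1 = k + t := by omega
  have h3 : k + 1 + t - 1 = k + t := by omega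
  rw [h1, h2, h3, Nat.choose_succ_succ, add_comm]
theorem sexp_pos (t k : ℕ) : 1 ≤ sexp t k := Nat.one_le_two_pow

def WClaim (t c : ℕ) : Prop := ∀ k m, ∃ g N, (∃ blk : Fin g → Fin m → Fin N,
  SWeak (2 * t + 2) (sexp t k) blk) ∧ g * m = N * sexp t k ∧ 1 ≤ g ∧
  g ≤ ack (k + c) (3 * m) ∧ N ≤ ack (k + c) (3 * m)

def TClaim (t c k m : ℕ) : Prop := ∃ g N, (∃ blk : Fin g → Fin m → Fin N,
  SStrong (2 * t + 2) (sexp t k) blk) ∧ g * m = N * sexp t k ∧ 1 ≤ g ∧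
  g ≤ ack (k + c) (3 * m) ∧ N ≤ ack (k + c) (3 * m)

theorem cube_le (y : ℕ) : y ^ 3 + y + 3 ≤ 2 ^ (y + 3) := by
  induction y with
  | zero => norm_num
  | succ y ih =>
    rcases Nat.lt_or_ge y 4 with h | h
    · interval_cases y <;> norm_num
    · have : 2 ^ (y + 1 + 3) = 2 * 2 ^ (y + 3) := by ring
      rw [this]
      nlinarith [Nat.mul_le_mul (Nat.mul_le_mul h (le_refl y)) (le_refl y), Nat.mul_le_mul h (le_refl y)]

theorem ack_cube (K y : ℕ) (hK : 3 ≤ K) : y ^ 3 + y ≤ ack K y := by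
  refine le_trans ?_ (ack_le_ack hK (le_refl y))
  rw [ack_three]
  have := cube_le y
  omega

theorem ack_triple (K y : ℕ) (hK : 3 ≤ K) : 3 * y ≤ ack K y := by
  refine le_trans ?_ (ack_le_ack hK (le_refl y))
  rw [ack_three]
  rcases Nat.lt_or_ge y 2 with h | h
  · interval_cases y <;> norm_num
  · have := cube_le y
    have : 3 * y ≤ y ^ 3 + y := by
      nlinarith [Nat.mul_le_mul (Nat.mul_le_mul h h) (le_refl y)]
    omega

theorem ack_ack_le {a b c : ℕ} (x : ℕ) (ha : a + 2 ≤ c) (hb : b + 2 ≤ c) :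
    ack a (ack b x) ≤ ack c x := by
  refine (ack_ack_lt_ack_max_add_two a b x).le.trans (ack_le_ack ?_ (le_refl x))
  have : max a b ≤ c - 2 := by simp; omega
  omega

theorem tclaim_step (t c0 k m : ℕ) (hc0 : 3 ≤ c0) (hW : WClaim t c0)
    (h1 : ∀ m, TClaim (t + 1) (c0 + 5) k m) (h3 : TClaim (t + 1) (c0 + 5) (k + 1) m) :
    TClaim (t + 1) (c0 + 5) (k + 1) (m + 1) := by
  obtain ⟨f, N3, ⟨b3, s3⟩, e3, p3, gb3, nb3⟩ := h3
  obtain ⟨g2, N2, ⟨b2, s2⟩, e2, p2, gb2, nb2⟩ := hW (k + 1) f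
  obtain ⟨g1, N1, ⟨b1, s1⟩, e1, p1, gb1, nb1⟩ := h1 N2
  rw [sexp_succ] at s3 e3
  have hh := scombine (s := 2 * t + 2) (by omega) (by omega) s1 s2 s3
  refine ⟨g1 * (g2 * f), N1 + g1 * (g2 * N3), ?_, ?_, ?_, ?_, ?_⟩
  · rw [sexp_succ]; exact hh
  · rw [sexp_succ]
    calc g1 * (g2 * f) * (m + 1) = g1 * g2 * (f * m) + g1 * (g2 * f) := by ring
      _ = g1 * g2 * (N3 * (sexp (t + 1) k * sexp t (k + 1))) + (g1 * N2) * sexp t (k + 1) := by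
          rw [e3, e2]; ring
      _ = _ := by rw [e1]; ring
  · exact Nat.mul_pos p1 (Nat.mul_pos p2 p3)
  all_goals
    set F := ack (k + 1 + (c0 + 5)) (3 * m) with hF
    set X := ack (k + (c0 + 5)) F with hX
    set Y := ack (k + (c0 + 5)) X with hY
    have hfin : ack (k + 1 + (c0 + 5)) (3 * (m + 1)) = ack (k + (c0 + 5)) Y := by
      have r1 : k + 1 + (c0 + 5) = (k + (c0 + 5)) + 1 := by ring
      have r2 : 3 * (m + 1) = 3 * m + 1 + 1 + 1 := by ring
      rw [r1, r2, ack_succ_succ, ack_succ_succ, ack_succ_succ, ← r1]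
    have q1 : 3 * ack (k + 1 + c0) (3 * f) ≤ X := by
      calc 3 * ack (k + 1 + c0) (3 * f) ≤ ack 3 (ack (k + 1 + c0) (ack 3 F)) := by
            refine (ack_triple 3 _ le_rfl).trans (ack_mono_right _ (ack_mono_right _ ?_))
            exact (Nat.mul_le_mul_left 3 gb3).trans (ack_triple 3 _ le_rfl)
        _ ≤ ack 3 (ack (k + 3 + c0) F) := ack_mono_right _ (ack_ack_le _ (by omega) (by omega))
        _ ≤ X := ack_ack_le _ (by omega) (by omega)
    have q2 : g2 ≤ X := by omega
    have q3 : 3 * N2 ≤ X := by omega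
    have q4 : F ≤ X := (lt_ack_right _ _).le
    have q5 : X ≤ Y := (lt_ack_right _ _).le
    have q6 : g1 ≤ Y := gb1.trans (ack_mono_right _ q3)
    have q7 : N1 ≤ Y := nb1.trans (ack_mono_right _ q3)
    have q8 : Y ^ 3 + Y ≤ ack (k + (c0 + 5)) Y := ack_cube _ _ (by omega)
    rw [hfin]
  · calc g1 * (g2 * f) ≤ Y * (Y * Y) :=
          Nat.mul_le_mul q6 (Nat.mul_le_mul (q2.trans q5) (gb3.trans (q4.trans q5)))
      _ ≤ _ := by nlinarith
  · calc N1 + g1 * (g2 * N3) ≤ Y + Y * (Y * Y) :=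
          Nat.add_le_add q7 (Nat.mul_le_mul q6 (Nat.mul_le_mul (q2.trans q5) (nb3.trans (q4.trans q5))))
      _ ≤ _ := by nlinarith

theorem tclaim_all (t c0 : ℕ) (hc0 : 3 ≤ c0) (hW : WClaim t c0) :
    ∀ k m, TClaim (t + 1) (c0 + 5) k m := by
  intro k
  induction k with
  | zero =>
    intro m
    refine ⟨1, m, ⟨fun _ j => j, ?_⟩, ?_, le_rfl, ?_, ?_⟩
    · rw [sexp_base]; exact sbase_one _ m (by omega)
    · rw [sexp_base]; ring
    · exact ack_pos _ _
    · exact (by omega : m ≤ 3 * m).trans (lt_ack_right _ _).le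
  | succ k ih =>
    intro m
    induction m with
    | zero =>
      refine ⟨1, 0, ⟨_, sbase_zero _ _⟩, ?_, le_rfl, ?_, ?_⟩
      · simp
      · exact ack_pos _ _
      · exact Nat.zero_le _
    | succ m ihm => exact tclaim_step t c0 k m hc0 hW ih ihm

theorem wclaim_all (t : ℕ) : ∃ c, 3 ≤ c ∧ WClaim t c := by
  induction t with
  | zero =>
    refine ⟨3, le_rfl, ?_⟩
    intro k m
    refine ⟨2, m, ⟨fun i j => if i = 0 then j else Fin.rev j, ?_⟩, ?_, by norm_num, ?_, ?_⟩
    · rw [sexp_zero]; exact sbase_two m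
    · rw [sexp_zero]; ring
    · have := add_lt_ack (k + 3) (3 * m); omega
    · have := add_lt_ack (k + 3) (3 * m); omega
  | succ t ih =>
    obtain ⟨c0, hc0, hW⟩ := ih
    refine ⟨c0 + 5, by omega, fun k m => ?_⟩
    obtain ⟨g, N, ⟨blk, hS⟩, h⟩ := tclaim_all t c0 hc0 hW k m
    exact ⟨g, N, sstrong_weak (sexp_pos _ _) hS, h⟩

/-- final packaged structure -/
theorem sfinal (t : ℕ) : ∃ c, ∀ k, ∃ g m N, (∃ blk : Fin g → Fin m → Fin N,
    SWeak (2 * t + 2) (sexp t k) blk) ∧ g ≤ N ∧ 1 ≤ N ∧ N ≤ ack (k + c) 0 := by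
  obtain ⟨c, hc, hW⟩ := wclaim_all t
  refine ⟨c + 6, fun k => ?_⟩
  obtain ⟨g, N, hb, he, hp, hg, hN⟩ := hW k (sexp t k)
  have hgN : g = N := Nat.eq_of_mul_eq_mul_right (sexp_pos t k) he
  refine ⟨g, sexp t k, N, hb, hgN.le, hgN ▸ hp, ?_⟩
  have hmu : sexp t k ≤ ack (k + c) 3 := by
    obtain ⟨g', N', -, he', hp', hg', -⟩ := hW k 1
    have : 1 ≤ N' := by
      rcases Nat.eq_zero_or_pos N' with h | h
      · subst h; omega
      · exact h
    have : sexp t k ≤ N' * sexp t k := Nat.le_mul_of_pos_left _ this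
    rw [Nat.mul_one] at hg' he'
    omega
  have h3 : (3 : ℕ) = ack 2 0 := by rw [ack_two]
  calc N ≤ ack (k + c) (3 * sexp t k) := hN
    _ ≤ ack (k + c) (ack 3 (ack (k + c) 3)) := by
        refine ack_mono_right _ ?_
        exact (Nat.mul_le_mul_left 3 hmu).trans (ack_triple 3 _ le_rfl)
    _ ≤ ack (k + c) (ack (k + c + 2) 3) := ack_mono_right _ (ack_ack_le _ (by omega) (by omega))
    _ ≤ ack (k + c + 4) 3 := ack_ack_le _ (by omega) (by omega)
    _ = ack (k + c + 4) (ack 2 0) := by rw [← h3]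
    _ ≤ ack (k + (c + 6)) 0 := ack_ack_le _ (by omega) (by omega)

theorem iterCount_succ_le (f : ℕ → ℕ) (fuel m : ℕ) (b : ℕ) (hb : ∀ fuel, iterCount f fuel (f m) ≤ b) :
    iterCount f fuel m ≤ 1 + b := by
  cases fuel with
  | zero => simp [iterCount]
  | succ fuel =>
    rw [iterCount]
    split_ifs
    · omega
    · have := hb fuel; omega

theorem iterCount_le_one (f : ℕ → ℕ) (fuel m : ℕ) (hm : m ≤ 1) : iterCount f fuel m = 0 := by
  cases fuel with
  | zero => simp [iterCount]
  | succ fuel => rw [iterCount, if_pos hm]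

theorem alphaHier_small (d : ℕ) : (∀ n, n ≤ 2 → alphaHier (d + 1) n ≤ 1) ∧
    (∀ n, n ≤ 4 → alphaHier (d + 1) n ≤ 2) ∧
    (∀ fuel n, n ≤ 2 → iterCount (alphaHier (d + 1)) fuel n ≤ 1) ∧
    (∀ fuel n, n ≤ 4 → iterCount (alphaHier (d + 1)) fuel n ≤ 2) := by
  have key : ∀ f : ℕ → ℕ, (∀ n, n ≤ 2 → f n ≤ 1) → (∀ n, n ≤ 4 → f n ≤ 2) →
      (∀ fuel n, n ≤ 2 → iterCount f fuel n ≤ 1) ∧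
      (∀ fuel n, n ≤ 4 → iterCount f fuel n ≤ 2) := by
    intro f h1 h2
    have h3 : ∀ fuel n, n ≤ 2 → iterCount f fuel n ≤ 1 := fun fuel n hn =>
      iterCount_succ_le f fuel n 0 (fun fuel => (iterCount_le_one f fuel _ (h1 n hn)).le)
    exact ⟨h3, fun fuel n hn => iterCount_succ_le f fuel n 1 (fun fuel => h3 fuel _ (h2 n hn))⟩
  induction d with
  | zero =>
    have h1 : ∀ n, n ≤ 2 → alphaHier 1 n ≤ 1 := fun n hn => by rw [alphaHier]; omega
    have h2 : ∀ n, n ≤ 4 → alphaHier 1 n ≤ 2 := fun n hn => by rw [alphaHier]; omega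
    exact ⟨h1, h2, key _ h1 h2⟩
  | succ d ih =>
    have h1 : ∀ n, n ≤ 2 → alphaHier (d + 2) n ≤ 1 := fun n hn => by
      rw [alphaHier]; exact ih.2.2.1 n n hn
    have h2 : ∀ n, n ≤ 4 → alphaHier (d + 2) n ≤ 2 := fun n hn => by
      rw [alphaHier]; exact ih.2.2.2 n n hn
    exact ⟨h1, h2, key _ h1 h2⟩

theorem alphaHier_le (d : ℕ) : ∀ x n, n ≤ ack (d + 2) x + 3 → alphaHier (d + 1) n ≤ x + 3 := by
  induction d with
  | zero =>
    intro x n h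
    rw [ack_two] at h
    rw [alphaHier]
    omega
  | succ d ih =>
    have key : ∀ x n fuel, n ≤ ack (d + 3) x + 3 → iterCount (alphaHier (d + 1)) fuel n ≤ x + 3 := by
      intro x
      induction x with
      | zero =>
        intro n fuel h
        rw [ack_succ_zero] at h
        have h1 := ih 1 n h
        exact iterCount_succ_le _ fuel n 2 (fun fuel => (alphaHier_small d).2.2.2 fuel _ h1)
      | succ x ihx =>
        intro n fuel h
        rw [ack_succ_succ] at h
        have h1 := ih _ n h
        have := iterCount_succ_le _ fuel n (x + 3) (fun fuel => ihx _ fuel h1)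
        omega
    intro x n h
    rw [alphaHier]
    exact key x n n h

theorem ack_le_of_invAck (n d : ℕ) (h : d + 2 ≤ invAck n) : ack (d + 2) 0 ≤ n := by
  by_contra hcon
  have h1 : alphaHier (d + 1) n ≤ 3 := alphaHier_le d 0 n (by omega)
  have : invAck n ≤ d + 1 := Nat.sInf_le ⟨by omega, h1⟩
  omega


section VCPart

def SApp {α L : Type} [LinearOrder α] (Occ : L → Set α) : List L → Set α → Prop
  | [], _ => True
  | a :: l, U => ∃ p ∈ Occ a, p ∈ U ∧ SApp Occ l (Set.Ioi p)

def SAlt {α L : Type} [LinearOrder α] (Occ : L → Set α) : ℕ → L → L → Set α → Prop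
  | 0, _, _, _ => True
  | n + 1, a, b, U => ∃ p ∈ Occ a, p ∈ U ∧ SAlt Occ n b a (Set.Ioi p)

variable {α L : Type} [LinearOrder α] {Occ : L → Set α}

theorem SApp.mono {l : List L} {U V : Set α} (h : SApp Occ l U) (hUV : U ⊆ V) : SApp Occ l V := by
  cases l with
  | nil => trivial
  | cons a l =>
    obtain ⟨p, h1, h2, h3⟩ := h
    exact ⟨p, h1, hUV h2, h3⟩

theorem SAlt.mono {n : ℕ} {a b : L} {U V : Set α} (h : SAlt Occ n a b U) (hUV : U ⊆ V) :
    SAlt Occ n a b V := by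
  cases n with
  | zero => trivial
  | succ n =>
    obtain ⟨p, h1, h2, h3⟩ := h
    exact ⟨p, h1, hUV h2, h3⟩

theorem salt_of_sapp [WellFoundedLT α] [DecidableEq L]
    (hdisj : ∀ a b p, p ∈ Occ a → p ∈ Occ b → a = b) (r : ℕ) :
    ∀ (A : Finset L) (U : Set α), A.card = r + 2 →
      (∀ l : List L, l.Nodup → l.toFinset = A → SApp Occ l U) →
      ∃ a ∈ A, ∃ b ∈ A, a ≠ b ∧ SAlt Occ (r + 3) a b U := by
  induction r with
  | zero =>
    intro A U hA h
    obtain ⟨a, b, hab, rfl⟩ := Finset.card_eq_two.1 hA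
    obtain ⟨p, hp, hpU, q, hq, hpq, -⟩ := h [a, b] (by simp [hab]) (by simp)
    obtain ⟨q', hq', hqU', p', hp', hpq', -⟩ := h [b, a] (by simp [hab.symm]) (by
      simp [Finset.pair_comm])
    rcases lt_trichotomy p q' with hlt | heq | hgt
    · exact ⟨a, by simp, b, by simp, hab, p, hp, hpU, q', hq', hlt, p', hp', hpq', trivial⟩
    · subst heq
      exact absurd (hdisj _ _ _ hp hq') hab
    · exact ⟨b, by simp, a, by simp, hab.symm, q', hq', hqU', p, hp, hgt, q, hq, hpq, trivial⟩
  | succ r ih =>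
    intro A U hA h
    have hlist : ∀ a ∈ A, ∀ l : List L, l.Nodup → l.toFinset = A.erase a → SApp Occ (a :: l) U := by
      intro a ha l hl hlA
      refine h _ ?_ ?_
      · rw [List.nodup_cons]
        refine ⟨fun hal => ?_, hl⟩
        have : a ∈ A.erase a := hlA ▸ List.mem_toFinset.2 hal
        simp at this
      · rw [List.toFinset_cons, hlA, Finset.insert_erase ha]
    have hfirst : ∀ a ∈ A, ∃ p ∈ Occ a, p ∈ U ∧ ∀ q ∈ Occ a, q ∈ U → p ≤ q := by
      intro a ha
      obtain ⟨p, hp, hpU, -⟩ := hlist a ha (A.erase a).toList (Finset.nodup_toList _)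
        (Finset.toList_toFinset _)
      obtain ⟨x, hx, hmin⟩ := (wellFounded_lt (α := α)).has_min (Occ a ∩ U) ⟨p, hp, hpU⟩
      exact ⟨x, hx.1, hx.2, fun q hq hqU => not_lt.1 (hmin q ⟨hq, hqU⟩)⟩
    have hne : A.Nonempty := Finset.card_pos.1 (by omega)
    have : Nonempty α := ⟨(hfirst _ hne.choose_spec).choose⟩
    choose! p hp hpU hmin using hfirst
    obtain ⟨a1, ha1, hmax⟩ := Finset.exists_max_image A p hne
    obtain ⟨a, ha, b, hb, hab, hal⟩ := ih (A.erase a1) (Set.Ioi (p a1))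
      (by rw [Finset.card_erase_of_mem ha1]; omega) (by
        intro l hl hlA
        obtain ⟨q, hq, hqU, hq'⟩ := hlist a1 ha1 l hl hlA
        exact hq'.mono (Set.Ioi_subset_Ioi (hmin a1 ha1 q hq hqU)))
    have haA := Finset.mem_of_mem_erase ha
    have hbA := Finset.mem_of_mem_erase hb
    refine ⟨b, hbA, a, haA, hab.symm, p b, hp b hbA, hpU b hbA, ?_⟩
    exact hal.mono (Set.Ioi_subset_Ioi (hmax b hbA))

def SGood (Occ : L → Set α) (s : ℕ) (h : α → ℕ) (a b : L) : Prop :=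
  (∀ p ∈ Occ a, ∀ q ∈ Occ b, h p % 2 ≠ h q % 2) ∧
  (∀ p ∈ Occ a ∪ Occ b, h p ≤ s) ∧
  (∀ p ∈ Occ a ∪ Occ b, ∀ q ∈ Occ a ∪ Occ b, p < q → h p ≤ h q)

theorem SGood.symm {s : ℕ} {h : α → ℕ} {a b : L} (H : SGood Occ s h a b) : SGood Occ s h b a := by
  obtain ⟨h1, h2, h3⟩ := H
  refine ⟨fun p hp q hq => (h1 q hq p hp).symm, ?_, ?_⟩
  · rw [Set.union_comm]; exact h2
  · rw [Set.union_comm]; exact h3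

theorem salt_le {s : ℕ} {h : α → ℕ} (l : ℕ) : ∀ (a b : L) (U : Set α), SGood Occ s h a b →
    SAlt Occ (l + 1) a b U → ∃ p ∈ Occ a, p ∈ U ∧ h p + l ≤ s := by
  induction l with
  | zero =>
    intro a b U H ⟨p, hp, hpU, _⟩
    exact ⟨p, hp, hpU, H.2.1 p (Or.inl hp)⟩
  | succ l ih =>
    intro a b U H ⟨p, hp, hpU, h'⟩
    obtain ⟨q, hq, hpq, hqs⟩ := ih b a _ H.symm h'
    refine ⟨p, hp, hpU, ?_⟩
    have h1 := H.1 p hp q hq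
    have h2 := H.2.2 p (Or.inl hp) q (Or.inr hq) hpq
    have : h p ≠ h q := fun e => h1 (by rw [e])
    omega

theorem sapp_of_pairwise (κ : L → α) (hκ : ∀ c, κ c ∈ Occ c) : ∀ (l : List L) (U : Set α),
    (∀ c ∈ l, κ c ∈ U) → l.Pairwise (fun c c' => κ c < κ c') → SApp Occ l U := by
  intro l
  induction l with
  | nil => intros; trivial
  | cons a l ih =>
    intro U hU hl
    rw [List.pairwise_cons] at hl
    exact ⟨κ a, hκ a, hU a (by simp), ih _ (fun c hc => hl.1 c hc) hl.2⟩

end VCPart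

theorem vc_of_cert {n k s : ℕ} {α : Type} [LinearOrder α] [WellFoundedLT α]
    (Occ : Fin n → Set α) (hdisj : ∀ a b p, p ∈ Occ a → p ∈ Occ b → a = b)
    (hcert : ∀ a b, a ≠ b → ∃ h, SGood Occ s h a b) (hs : s ≤ k) (hk : 1 ≤ k)
    (P : Finset (Equiv.Perm (Fin n)))
    (hP : ∀ π ∈ P, ∃ κ : Fin n → α, (∀ c, κ c ∈ Occ c) ∧ ∀ c c', π c < π c' ↔ κ c < κ c') :
    VCDimLE n k P := by
  rintro a ⟨ha, hsh⟩
  obtain ⟨r, rfl⟩ : ∃ r, k = r + 1 := ⟨k - 1, by omega⟩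
  have hcard : (Finset.univ.image a).card = r + 2 := by
    rw [Finset.card_image_of_injective _ ha.injective]; simp
  obtain ⟨x, -, y, -, hxy, hal⟩ := salt_of_sapp hdisj r (Finset.univ.image a) Set.univ hcard (by
    intro l hl hlA
    have hlen : l.length = r + 2 := by
      rw [← hcard, ← hlA, List.toFinset_card_of_nodup hl]
    have hmem : ∀ i, a i ∈ l := fun i => by
      rw [← List.mem_toFinset, hlA]; simp
    let e : Fin (r + 1 + 1) → Fin (r + 1 + 1) := fun i =>
      ⟨l.idxOf (a i), by rw [← hlen]; exact List.idxOf_lt_length_iff.2 (hmem i)⟩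
    have he : Function.Injective e := by
      intro i j hij
      have : l.idxOf (a i) = l.idxOf (a j) := congrArg Fin.val hij
      exact ha.injective ((List.idxOf_inj (hmem i)).1 this)
    obtain ⟨π, hπ, hres⟩ := hsh (Equiv.ofBijective e (Finite.injective_iff_bijective.1 he))
    obtain ⟨κ, hκ, hlt⟩ := hP π hπ
    refine sapp_of_pairwise κ hκ l _ (fun _ _ => trivial) ?_
    rw [List.pairwise_iff_getElem]
    intro i j hi hj hij
    have hex : ∀ c ∈ l, ∃ u, a u = c := fun c hc => by
      rw [← List.mem_toFinset, hlA] at hc; simpa using hc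
    obtain ⟨u, hu⟩ := hex _ (List.getElem_mem hi)
    obtain ⟨v, hv⟩ := hex _ (List.getElem_mem hj)
    rw [← hu, ← hv, ← hlt, ← hres u v]
    show e u < e v
    rw [Fin.lt_def]
    show l.idxOf (a u) < l.idxOf (a v)
    rw [hu, hv, hl.idxOf_getElem, hl.idxOf_getElem]
    exact hij)
  obtain ⟨h, H⟩ := hcert x y hxy
  obtain ⟨p, -, -, hp⟩ := salt_le (r + 2) x y _ H hal
  omega


theorem exists_perm_of_key {n : ℕ} {α : Type} [LinearOrder α] (κ : Fin n → α)
    (hκ : Function.Injective κ) :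
    ∃ π : Equiv.Perm (Fin n), ∀ c c', π c < π c' ↔ κ c < κ c' := by
  refine ⟨(Tuple.sort κ).symm, fun c c' => ?_⟩
  have h1 : StrictMono (κ ∘ Tuple.sort κ) :=
    (Tuple.monotone_sort κ).strictMono_of_injective (hκ.comp (Tuple.sort κ).injective)
  rw [← h1.lt_iff_lt]
  simp

/-- code of a monotone map -/
def mcode {n : ℕ} (w : Fin n → ℕ) : Finset ℕ := Finset.univ.image (fun r => w r + (r : ℕ))

theorem mcode_inj {n : ℕ} {w w' : Fin n → ℕ} (hw : Monotone w) (hw' : Monotone w')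
    (h : mcode w = mcode w') : w = w' := by
  have hs : ∀ {v : Fin n → ℕ}, Monotone v → StrictMono (fun r => v r + (r : ℕ)) := by
    intro v hv a b hab
    have := hv hab.le
    have : (a : ℕ) < b := hab
    show v a + (a : ℕ) < v b + (b : ℕ)
    omega
  have h2 : Set.range (fun r => w r + (r : ℕ)) = Set.range (fun r => w' r + (r : ℕ)) := by
    have := congrArg (fun s : Finset ℕ => (s : Set ℕ)) h
    simpa [mcode] using this
  have h3 := (StrictMono.range_inj (hs hw) (hs hw')).1 h2
  funext r
  have := congrFun h3 r
  simpa using this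

theorem scount {n k s g m N μ : ℕ} {blk : Fin g → Fin m → Fin N} (hS : SWeak s μ blk)
    (hN : 1 ≤ N) (hNn : N ≤ n) (hg : g ≤ N) (hs1 : 1 ≤ s) (hs : s ≤ k) :
    ∃ P : Finset (Equiv.Perm (Fin n)), VCDimLE n k P ∧ μ ^ n ≤ P.card * 2 ^ (3 * n) := by
  classical
  choose o ho hob using hS.occ
  let q : Fin n → ℕ := fun c => (c : ℕ) / N
  let lt : Fin n → Fin N := fun c => ⟨(c : ℕ) % N, Nat.mod_lt _ hN⟩
  have hql : ∀ c c', q c = q c' → lt c = lt c' → c = c' := by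
    intro c c' h1 h2
    have h2' : (c : ℕ) % N = (c' : ℕ) % N := congrArg Fin.val h2
    have h1' : (c : ℕ) / N = (c' : ℕ) / N := h1
    apply Fin.ext
    rw [← Nat.div_add_mod (c : ℕ) N, ← Nat.div_add_mod (c' : ℕ) N, h1', h2']
  let key : (Fin n → Fin μ) → Fin n → ℕ ×ₗ (Fin g ×ₗ Fin m) := fun F c =>
    toLex (q c, toLex (o (lt c) (F c)))
  let Occ : Fin n → Set (ℕ ×ₗ (Fin g ×ₗ Fin m)) := fun c =>
    {p | (ofLex p).1 = q c ∧ blk (ofLex (ofLex p).2).1 (ofLex (ofLex p).2).2 = lt c}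
  have hkO : ∀ F c, key F c ∈ Occ c := fun F c => ⟨rfl, hob _ _⟩
  have hdisj : ∀ a b p, p ∈ Occ a → p ∈ Occ b → a = b := by
    intro a b p ha hb
    exact hql _ _ (ha.1.symm.trans hb.1) (ha.2.symm.trans hb.2)
  have hkinj : ∀ F, Function.Injective (key F) := by
    intro F c c' h
    exact hdisj c c' _ (hkO F c) (h ▸ hkO F c')
  have hcert : ∀ a b, a ≠ b → ∃ h, SGood Occ s h a b := by
    intro a b hab
    wlog hlt : a < b generalizing a b
    · obtain ⟨h, H⟩ := this b a hab.symm (lt_of_le_of_ne (not_lt.1 hlt) hab.symm)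
      exact ⟨h, H.symm⟩
    have hle : q a ≤ q b := Nat.div_le_div_right (le_of_lt hlt)
    rcases hle.lt_or_eq with hq | hq
    · refine ⟨fun p => if (ofLex p).1 = q a then 0 else 1, ?_, ?_, ?_⟩
      · rintro p ⟨hp, -⟩ p' ⟨hp', -⟩
        have : (ofLex p').1 ≠ q a := by omega
        simp [hp, this]
      · intro p _
        dsimp only
        split_ifs <;> omega
      · intro p hp p' hp' hpp
        dsimp only
        have h1 : (ofLex p).1 ≤ (ofLex p').1 := by
          rcases Prod.Lex.lt_iff.1 hpp with h | h
          · exact h.le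
          · exact h.1.le
        have h2 : (ofLex p).1 = q a ∨ (ofLex p).1 = q b := hp.imp (fun h => h.1) (fun h => h.1)
        split_ifs <;> omega
    · have hl : lt a < lt b := by
        have hq' : (a : ℕ) / N = (b : ℕ) / N := hq
        have h1 := Nat.div_add_mod (a : ℕ) N
        have h2 := Nat.div_add_mod (b : ℕ) N
        have h3 : (a : ℕ) < b := hlt
        rw [hq'] at h1
        show (a : ℕ) % N < (b : ℕ) % N
        omega
      obtain ⟨h, c1, c2, c3, c4⟩ := hS.cert _ _ hl
      refine ⟨fun p => h (ofLex (ofLex p).2).1 (ofLex (ofLex p).2).2, ?_, ?_, ?_⟩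
      · rintro p ⟨-, hp⟩ p' ⟨-, hp'⟩
        have := c1 _ _ hp
        have := c2 _ _ hp'
        dsimp only
        omega
      · intro p hp
        exact c3 _ _ (hp.imp (fun h => h.2) (fun h => h.2))
      · intro p hp p' hp' hpp
        refine c4 _ _ _ _ (hp.imp (fun h => h.2) (fun h => h.2))
          (hp'.imp (fun h => h.2) (fun h => h.2)) ?_
        have e1 : (ofLex p).1 = q a := by
          rcases hp with h | h
          · exact h.1
          · exact h.1.trans hq.symm
        have e2 : (ofLex p').1 = q a := by
          rcases hp' with h | h
          · exact h.1
          · exact h.1.trans hq.symm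
        rcases Prod.Lex.lt_iff.1 hpp with h | h
        · omega
        · exact Prod.Lex.lt_iff.1 h.2
  choose π hπ using fun F => exists_perm_of_key (key F) (hkinj F)
  refine ⟨Finset.univ.image π, ?_, ?_⟩
  · refine vc_of_cert Occ hdisj hcert hs (by omega) _ ?_
    intro p hp
    obtain ⟨F, -, rfl⟩ := Finset.mem_image.1 hp
    exact ⟨key F, hkO F, hπ F⟩
  · let bv : (Fin n → Fin μ) → Fin n → ℕ := fun F c => q c * g + ((o (lt c) (F c)).1 : ℕ)
    have hbv : ∀ F c c', π F c ≤ π F c' → bv F c ≤ bv F c' := by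
      intro F c c' h
      have h' : key F c ≤ key F c' := by
        rw [← not_lt, ← hπ, not_lt]; exact h
      rcases h'.lt_or_eq with h1 | h1
      · rcases Prod.Lex.lt_iff.1 h1 with h2 | ⟨h2, h3⟩
        · have h2' : q c + 1 ≤ q c' := h2
          have := Nat.mul_le_mul_right g h2'
          have := (o (lt c) (F c)).1.isLt
          show q c * g + _ ≤ q c' * g + _
          rw [Nat.add_mul] at *
          omega
        · have h2' : q c = q c' := h2
          have h4 : (o (lt c) (F c)).1 ≤ (o (lt c') (F c')).1 := by
            rcases Prod.Lex.lt_iff.1 h3 with h | h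
            · exact h.le
            · exact h.1.le
          have h5 : ((o (lt c) (F c)).1 : ℕ) ≤ (o (lt c') (F c')).1 := h4
          show q c * g + _ ≤ q c' * g + _
          rw [h2']
          omega
      · rw [hkinj F h1]
    let w : (Fin n → Fin μ) → Fin n → ℕ := fun F r => bv F ((π F).symm r)
    have hw : ∀ F, Monotone (w F) := by
      intro F r r' h
      exact hbv F _ _ (by simpa using h)
    have hwlt : ∀ F r, w F r < 2 * n := by
      intro F r
      show q _ * g + _ < 2 * n
      set c := (π F).symm r
      have h1 := (o (lt c) (F c)).1.isLt
      have h2 : q c * g ≤ n := by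
        calc q c * g ≤ q c * N := Nat.mul_le_mul_left _ hg
          _ ≤ c := Nat.div_mul_le_self _ _
          _ ≤ n := c.isLt.le
      omega
    have hinj : Function.Injective (fun F => (π F, mcode (w F))) := by
      intro F F' h
      obtain ⟨h1, h2⟩ := Prod.ext_iff.1 h
      have h1 : π F = π F' := h1
      have h3 : w F = w F' := mcode_inj (hw F) (hw F') h2
      funext c
      have h4 : bv F c = bv F' c := by
        have := congrFun h3 (π F c)
        simp only [w] at this
        rw [← h1] at this
        simpa using this
      have h5 : (o (lt c) (F c)).1 = (o (lt c) (F' c)).1 := by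
        apply Fin.ext
        simp only [bv] at h4
        omega
      have h6 : (o (lt c) (F c)).2 = (o (lt c) (F' c)).2 := by
        apply hS.inj (o (lt c) (F c)).1
        rw [hob]
        rw [h5, hob]
      exact ho _ (Prod.ext h5 h6)
    calc μ ^ n = (Finset.univ : Finset (Fin n → Fin μ)).card := by simp
      _ ≤ ((Finset.univ.image π) ×ˢ (Finset.range (3 * n)).powerset).card := by
          refine Finset.card_le_card_of_injOn _ ?_ hinj.injOn
          intro F _
          simp only [Finset.coe_product, Set.mem_prod, Finset.mem_coe, Finset.mem_powerset]
          refine ⟨Finset.mem_image_of_mem _ (Finset.mem_univ _), ?_⟩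
          intro x hx
          obtain ⟨r, -, rfl⟩ := Finset.mem_image.1 hx
          have := hwlt F r
          have := r.isLt
          rw [Finset.mem_range]
          omega
      _ = _ := by rw [Finset.card_product, Finset.card_powerset, Finset.card_range]

theorem vc_single (n k : ℕ) (hk : 1 ≤ k) : VCDimLE n k {1} := by
  rintro a ⟨ha, hsh⟩
  obtain ⟨π, hπ, h⟩ := hsh (Equiv.swap 0 (Fin.last k))
  rw [Finset.mem_singleton] at hπ
  subst hπ
  have h0 : (0 : Fin (k + 1)) < Fin.last k := by
    rw [Fin.lt_def]; simp; omega
  have := (h 0 (Fin.last k)).2 (by simpa using ha h0)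
  simp only [Equiv.swap_apply_left, Equiv.swap_apply_right] at this
  exact absurd this (not_lt.2 h0.le)

/-- For every `k ≥ 4`, with `t = ⌊(k−2)/2⌋`, there is a constant `C_k` such
that for every `n ≥ 1` there is a family of `n`-permutations of size at least
`2 ^ (n·((1/t!)·α(n)^t − C_k·α(n)^(t−1)))` with VC-dimension at most `k`. -/
theorem rk_lower_bound :
    ∀ k : ℕ, 4 ≤ k → ∃ C : ℝ, ∀ n : ℕ, 1 ≤ n →
      ∃ P : Finset (Equiv.Perm (Fin n)), VCDimLE n k P ∧
        (2 : ℝ) ^ ((n : ℝ) *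
          ((1 / (Nat.factorial ((k - 2) / 2) : ℝ)) * (invAck n : ℝ) ^ ((k - 2) / 2)
            - C * (invAck n : ℝ) ^ ((k - 2) / 2 - 1))) ≤ (P.card : ℝ) := by
  intro k hk
  obtain ⟨u, hu⟩ : ∃ u, (k - 2) / 2 = u + 1 := ⟨(k - 2) / 2 - 1, by omega⟩
  rw [hu]
  simp only [Nat.add_sub_cancel]
  obtain ⟨c, hc⟩ := sfinal (u + 1)
  have hfac : (1 : ℝ) ≤ (Nat.factorial (u + 1) : ℝ) := by
    exact_mod_cast Nat.factorial_pos _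
  refine ⟨(u + 1) * (c + 2) + (c + 2) + 3, fun n hn => ?_⟩
  set A := invAck n with hA
  have hn0 : (0 : ℝ) ≤ n := Nat.cast_nonneg _
  have hA0 : (0 : ℝ) ≤ A := Nat.cast_nonneg _
  rcases Nat.lt_or_ge A (c + 2) with hsmall | hbig
  · refine ⟨{1}, vc_single n k (by omega), ?_⟩
    rw [Finset.card_singleton, Nat.cast_one]
    refine Real.rpow_le_one_of_one_le_of_nonpos (by norm_num) ?_
    refine mul_nonpos_of_nonneg_of_nonpos hn0 ?_
    have h1 : (1 / (Nat.factorial (u + 1) : ℝ)) * (A : ℝ) ^ (u + 1) ≤ (A : ℝ) * (A : ℝ) ^ u := by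
      rw [pow_succ' (A : ℝ) u]
      refine mul_le_of_le_one_left (by positivity) ?_
      rw [div_le_one (by linarith)]; exact hfac
    have h2 : (A : ℝ) ≤ (u + 1) * (c + 2) + (c + 2) + 3 := by
      have : (A : ℝ) ≤ c + 2 := by exact_mod_cast hsmall.le
      have : (0 : ℝ) ≤ (u + 1) * (c + 2) := by positivity
      linarith
    have h3 := mul_le_mul_of_nonneg_right h2 (pow_nonneg hA0 u)
    linarith
  · obtain ⟨k0, hk0⟩ : ∃ k0, A = k0 + (c + 2) := ⟨A - (c + 2), by omega⟩
    obtain ⟨g, m, N, ⟨blk, hS⟩, hgN, hN, hNack⟩ := hc k0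
    have hack : ack (k0 + c + 2) 0 ≤ n := ack_le_of_invAck n (k0 + c) (by omega)
    have hNn : N ≤ n := hNack.trans ((ack_le_ack (by omega) le_rfl).trans hack)
    obtain ⟨P, hP, hcount⟩ := scount (k := k) hS hN hNn hgN (by omega) (by omega)
    refine ⟨P, hP, ?_⟩
    set M := Nat.choose (k0 + (u + 1) - 1) (u + 1) with hM
    have hcount' : (2 : ℝ) ^ ((n : ℝ) * M) ≤ P.card * (2 : ℝ) ^ ((n : ℝ) * 3) := by
      have h1 : ((2 ^ M) ^ n : ℝ) ≤ P.card * 2 ^ (3 * n) := by exact_mod_cast hcount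
      have h2 : ((2 : ℝ) ^ M) ^ n = (2 : ℝ) ^ ((n : ℝ) * M) := by
        rw [← pow_mul, ← Real.rpow_natCast]; congr 1; push_cast; ring
      have h3 : (2 : ℝ) ^ (3 * n) = (2 : ℝ) ^ ((n : ℝ) * 3) := by
        rw [← Real.rpow_natCast]; congr 1; push_cast; ring
      rwa [h2, h3] at h1
    have hcard : (2 : ℝ) ^ ((n : ℝ) * (M - 3)) ≤ P.card := by
      rw [mul_sub, Real.rpow_sub (by norm_num), div_le_iff₀ (Real.rpow_pos_of_pos (by norm_num) _)]
      exact hcount'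
    refine le_trans ?_ hcard
    refine Real.rpow_le_rpow_of_exponent_le (by norm_num) ?_
    refine mul_le_mul_of_nonneg_left ?_ hn0
    have hMlow : (k0 : ℝ) ^ (u + 1) / (Nat.factorial (u + 1) : ℝ) ≤ M := by
      have := Nat.pow_le_choose (α := ℝ) (u + 1) (k0 + (u + 1) - 1)
      have e : k0 + (u + 1) - 1 + 1 - (u + 1) = k0 := by omega
      rw [e] at this
      exact this
    have hA1 : (1 : ℝ) ≤ (A : ℝ) := by
      have : 1 ≤ A := by omega
      exact_mod_cast this
    have hpow : (1 : ℝ) ≤ (A : ℝ) ^ u := one_le_pow₀ hA1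
    have hbern : (A : ℝ) ^ (u + 1) - (u + 1) * (c + 2) * (A : ℝ) ^ u ≤ (k0 : ℝ) ^ (u + 1) := by
      have hAk : (A : ℝ) = k0 + (c + 2) := by rw [hk0]; push_cast; ring
      have hk00 : (0 : ℝ) ≤ k0 := Nat.cast_nonneg _
      have hc0 : (0 : ℝ) ≤ (c : ℝ) := Nat.cast_nonneg _
      have gen : ∀ v : ℕ, (A : ℝ) ^ (v + 1) - (v + 1) * (c + 2) * (A : ℝ) ^ v ≤ (k0 : ℝ) ^ (v + 1) := by
        intro v
        induction v with
        | zero => simp; linarith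
        | succ v ih =>
          have hle : (k0 : ℝ) ^ (v + 1) ≤ (A : ℝ) ^ (v + 1) :=
            pow_le_pow_left₀ hk00 (by linarith) _
          have h1 := mul_le_mul_of_nonneg_left ih hA0
          have h2 : (k0 : ℝ) ^ (v + 1 + 1) = A * (k0 : ℝ) ^ (v + 1) - (c + 2) * (k0 : ℝ) ^ (v + 1) := by
            rw [hAk]; ring
          have h3 := mul_le_mul_of_nonneg_left hle (by linarith : (0 : ℝ) ≤ c + 2)
          rw [h2]
          push_cast
          have e1 : (A : ℝ) ^ (v + 1 + 1) = A * (A : ℝ) ^ (v + 1) := by ring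
          have e2 : (A : ℝ) * ((A : ℝ) ^ (v + 1) - (v + 1) * (c + 2) * (A : ℝ) ^ v)
              = A * (A : ℝ) ^ (v + 1) - (v + 1) * (c + 2) * (A : ℝ) ^ (v + 1) := by ring
          rw [e2] at h1
          linarith
      exact gen u
    have h1 : (1 / (Nat.factorial (u + 1) : ℝ)) * (A : ℝ) ^ (u + 1)
        - (u + 1) * (c + 2) * (A : ℝ) ^ u ≤ M := by
      refine le_trans ?_ hMlow
      rw [le_div_iff₀ (by linarith)]
      have hX : 0 ≤ (u + 1 : ℝ) * (c + 2) * (A : ℝ) ^ u := by positivity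
      have e : (1 / (Nat.factorial (u + 1) : ℝ) * (A : ℝ) ^ (u + 1)
        - (u + 1) * (c + 2) * (A : ℝ) ^ u) * (Nat.factorial (u + 1) : ℝ)
        = (A : ℝ) ^ (u + 1) - ((u + 1) * (c + 2) * (A : ℝ) ^ u) * (Nat.factorial (u + 1) : ℝ) := by
        field_simp
      rw [e]
      nlinarith
    have h2 : (0 : ℝ) ≤ ((c : ℝ) + 2) * (A : ℝ) ^ u := by positivity
    nlinarith
end

section
/- There exists a constant C such that for every integer n ≥ 1, the maximum number p₃(n) of 1-entries in an n×n (0,1)-matrix that is not 4-full satisfies p₃(n) ≤ C·n·α(n). -/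
/-! ## Proof of the upper bound -/

namespace P3

/-- Column `c` has an entry of `E` in each of the four row intervals cut out by `x, y, z`. -/
def Blk (E : Finset (ℕ × ℕ)) (x y z c : ℕ) : Prop :=
  (∃ r, r < x ∧ (r, c) ∈ E) ∧ (∃ r, x ≤ r ∧ r < y ∧ (r, c) ∈ E) ∧
  (∃ r, y ≤ r ∧ r < z ∧ (r, c) ∈ E) ∧ (∃ r, z ≤ r ∧ (r, c) ∈ E)

/-- `E` has no `(4,4)`-formation. -/
def Free (E : Finset (ℕ × ℕ)) : Prop :=
  ∀ x y z, ∀ T : Finset ℕ, (∀ c ∈ T, Blk E x y z c) → T.card ≤ 3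

lemma Free.mono {E F : Finset (ℕ × ℕ)} (hE : Free E) (h : F ⊆ E) : Free F := by
  intro x y z T hT
  refine hE x y z T fun c hc => ?_
  obtain ⟨⟨r1, a1, b1⟩, ⟨r2, a2, a2', b2⟩, ⟨r3, a3, a3', b3⟩, ⟨r4, a4, b4⟩⟩ := hT c hc
  exact ⟨⟨r1, a1, h b1⟩, ⟨r2, a2, a2', h b2⟩, ⟨r3, a3, a3', h b3⟩, ⟨r4, a4, h b4⟩⟩

/-- If every row of `S` lies in a formation of `E`, then `S` has few entries per row. -/
lemma rowBound {E S : Finset (ℕ × ℕ)} (hE : Free E) (a m : ℕ)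
    (hr : ∀ e ∈ S, a ≤ e.1 ∧ e.1 < a + m)
    (hS : ∀ r, ∃ x y z, ∀ c, (r, c) ∈ S → Blk E x y z c) : S.card ≤ 3 * m := by
  have := Finset.card_le_mul_card_image_of_maps_to (s := S) (t := Finset.Ico a (a + m))
    (f := Prod.fst) (fun e he => Finset.mem_Ico.2 (hr e he)) 3 ?_
  · simpa using this
  · intro r _
    obtain ⟨x, y, z, h⟩ := hS r
    have h1 : ((S.filter (fun e => e.1 = r)).image Prod.snd).card
        = (S.filter (fun e => e.1 = r)).card := by
      apply Finset.card_image_of_injOn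
      rintro ⟨r1, c1⟩ h1 ⟨r2, c2⟩ h2 h
      simp at h1 h2 h
      ext <;> simp [*]
    rw [← h1]
    apply hE x y z
    intro c hc
    simp only [Finset.mem_image, Finset.mem_filter] at hc
    obtain ⟨⟨r1, c1⟩, ⟨h2, h3⟩, h4⟩ := hc
    simp at h3 h4
    subst h3 h4
    exact h _ h2

/-- Contracted matrix. -/
def contr (γ : ℕ → ℕ) (E : Finset (ℕ × ℕ)) : Finset (ℕ × ℕ) := E.image (fun e => (γ e.1, e.2))

lemma Free.contr {E : Finset (ℕ × ℕ)} (hE : Free E) (γ s : ℕ → ℕ)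
    (hγ : ∀ r c, (r, c) ∈ E → ∀ g, γ r < g ↔ r < s g) : Free (contr γ E) := by
  intro x y z T hT
  refine hE (s x) (s y) (s z) T fun c hc => ?_
  have key : ∀ q, (q, c) ∈ P3.contr γ E → ∃ r, γ r = q ∧ (r, c) ∈ E := by
    intro q hq
    simp only [P3.contr, Finset.mem_image, Prod.mk.injEq] at hq
    obtain ⟨⟨r, c'⟩, h, h1, h2⟩ := hq
    simp at h1 h2
    subst h2
    exact ⟨r, h1, h⟩
  obtain ⟨⟨r1, a1, b1⟩, ⟨r2, a2, a2', b2⟩, ⟨r3, a3, a3', b3⟩, ⟨r4, a4, b4⟩⟩ := hT c hc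
  obtain ⟨q1, rfl, d1⟩ := key _ b1
  obtain ⟨q2, rfl, d2⟩ := key _ b2
  obtain ⟨q3, rfl, d3⟩ := key _ b3
  obtain ⟨q4, rfl, d4⟩ := key _ b4
  rw [hγ _ _ d1] at a1
  rw [hγ _ _ d2] at a2'
  rw [hγ _ _ d3] at a3'
  rw [← not_lt, hγ _ _ d2, not_lt] at a2
  rw [← not_lt, hγ _ _ d3, not_lt] at a3
  rw [← not_lt, hγ _ _ d4, not_lt] at a4
  exact ⟨⟨_, a1, d1⟩, ⟨_, a2, a2', d2⟩, ⟨_, a3, a3', d3⟩, ⟨_, a4, d4⟩⟩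

open Classical in
/-- The entries in global columns. -/
noncomputable def glob (γ : ℕ → ℕ) (E : Finset (ℕ × ℕ)) : Finset (ℕ × ℕ) :=
  E.filter (fun e => ∃ r, (r, e.2) ∈ E ∧ γ r ≠ γ e.1)

open Classical in
lemma globBound {E : Finset (ℕ × ℕ)} (hE : Free E) (γ s : ℕ → ℕ)
    (hγ : ∀ r c, (r, c) ∈ E → ∀ g, γ r < g ↔ r < s g) (a m : ℕ)
    (hr : ∀ e ∈ E, a ≤ e.1 ∧ e.1 < a + m) :
    (glob γ E).card ≤ (contr γ (glob γ E)).card + 9 * m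
      + 2 * ((glob γ E).image Prod.snd).card := by
  set G := glob γ E with hG
  have memG : ∀ r c, (r, c) ∈ G ↔ (r, c) ∈ E ∧ ∃ q, (q, c) ∈ E ∧ γ q ≠ γ r := by
    intro r c; simp [hG, glob]
  let before : ℕ → ℕ → Prop := fun r c => ∃ q, (q, c) ∈ E ∧ γ q < γ r
  let after : ℕ → ℕ → Prop := fun r c => ∃ q, (q, c) ∈ E ∧ γ r < γ q
  let early : ℕ → ℕ → Prop := fun r c => ∃ q, (q, c) ∈ E ∧ γ q = γ r ∧ q < r
  let late : ℕ → ℕ → Prop := fun r c => ∃ q, (q, c) ∈ E ∧ γ q = γ r ∧ r < q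
  let A := G.filter (fun e => ¬ early e.1 e.2)
  let S1 := G.filter (fun e => before e.1 e.2 ∧ after e.1 e.2 ∧ early e.1 e.2)
  let S2 := G.filter (fun e => after e.1 e.2 ∧ early e.1 e.2 ∧ late e.1 e.2)
  let S3 := G.filter (fun e => before e.1 e.2 ∧ early e.1 e.2 ∧ late e.1 e.2)
  let L1 := G.filter (fun e => ¬ after e.1 e.2 ∧ ¬ late e.1 e.2)
  let L2 := G.filter (fun e => ¬ before e.1 e.2 ∧ ¬ late e.1 e.2)
  have hcov : G ⊆ A ∪ (S1 ∪ (S2 ∪ (S3 ∪ (L1 ∪ L2)))) := by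
    rintro ⟨r, c⟩ he
    have hba : before r c ∨ after r c := by
      obtain ⟨_, q, h1, h2⟩ := (memG _ _).1 he
      rcases lt_or_gt_of_ne h2 with h | h
      · exact Or.inl ⟨q, h1, h⟩
      · exact Or.inr ⟨q, h1, h⟩
    simp only [A, S1, S2, S3, L1, L2, Finset.mem_union, Finset.mem_filter, he, true_and]
    clear_value before after early late
    clear hr hγ memG he hE
    by_cases h1 : early r c
    · by_cases h2 : late r c
      · rcases hba with h | h
        · exact Or.inr (Or.inr (Or.inr (Or.inl ⟨h, h1, h2⟩)))
        · exact Or.inr (Or.inr (Or.inl ⟨h, h1, h2⟩))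
      · by_cases h3 : before r c
        · by_cases h4 : after r c
          · exact Or.inr (Or.inl ⟨h3, h4, h1⟩)
          · exact Or.inr (Or.inr (Or.inr (Or.inr (Or.inl ⟨h4, h2⟩))))
        · exact Or.inr (Or.inr (Or.inr (Or.inr (Or.inr ⟨h3, h2⟩))))
    · exact Or.inl h1
  have hcard : G.card ≤ A.card + (S1.card + (S2.card + (S3.card + (L1.card + L2.card)))) := by
    refine (Finset.card_le_card hcov).trans ?_
    refine (Finset.card_union_le _ _).trans (Nat.add_le_add_left ?_ _)
    refine (Finset.card_union_le _ _).trans (Nat.add_le_add_left ?_ _)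
    refine (Finset.card_union_le _ _).trans (Nat.add_le_add_left ?_ _)
    refine (Finset.card_union_le _ _).trans (Nat.add_le_add_left ?_ _)
    exact Finset.card_union_le _ _
  have hrG : ∀ e ∈ G, a ≤ e.1 ∧ e.1 < a + m := fun e he => hr e (((memG e.1 e.2).1 he).1)
  have hA : A.card ≤ (contr γ G).card := by
    apply Finset.card_le_card_of_injOn (fun e => (γ e.1, e.2))
    · intro e he
      exact Finset.mem_image_of_mem _ (Finset.mem_filter.1 he).1
    · rintro ⟨r, c⟩ h1 ⟨r', c'⟩ h2 h
      simp only [A, Finset.coe_filter, Set.mem_setOf_eq, Prod.mk.injEq] at h1 h2 h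
      obtain ⟨h, rfl⟩ := h
      rcases lt_trichotomy r r' with h3 | h3 | h3
      · exact absurd ⟨r, ((memG _ _).1 h1.1).1, h, h3⟩ h2.2
      · rw [h3]
      · exact absurd ⟨r', ((memG _ _).1 h2.1).1, h.symm, h3⟩ h1.2
  have hL : ∀ L ⊆ G, (∀ r r' c, r < r' → (r, c) ∈ L → (r', c) ∈ L → False) →
      L.card ≤ (G.image Prod.snd).card := by
    intro L hLG hL
    apply Finset.card_le_card_of_injOn Prod.snd
    · intro e he
      exact Finset.mem_image_of_mem _ (hLG he)
    · rintro ⟨r, c⟩ h1 ⟨r', c'⟩ h2 h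
      simp only at h
      subst h
      rcases lt_trichotomy r r' with h3 | h3 | h3
      · exact (hL _ _ _ h3 h1 h2).elim
      · rw [h3]
      · exact (hL _ _ _ h3 h2 h1).elim
  have mono : ∀ r r' c, (r, c) ∈ E → (r', c) ∈ E → r < r' → γ r ≤ γ r' := by
    intro r r' c h1 h2 h3
    by_contra h4
    have h5 := (hγ _ _ h2 _).1 (not_le.1 h4)
    exact absurd ((hγ _ _ h1 _).2 (h3.trans h5)) (lt_irrefl _)
  have hL1 : L1.card ≤ (G.image Prod.snd).card := by
    apply hL _ (Finset.filter_subset _ _)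
    intro r r' c h h1 h2
    simp only [L1, Finset.mem_filter] at h1 h2
    have e1 := ((memG _ _).1 h1.1).1
    have e2 := ((memG _ _).1 h2.1).1
    rcases (mono r r' c e1 e2 h).lt_or_eq with h3 | h3
    · exact h1.2.1 ⟨r', e2, h3⟩
    · exact h1.2.2 ⟨r', e2, h3.symm, h⟩
  have hL2 : L2.card ≤ (G.image Prod.snd).card := by
    apply hL _ (Finset.filter_subset _ _)
    intro r r' c h h1 h2
    simp only [L2, Finset.mem_filter] at h1 h2
    have e1 := ((memG _ _).1 h1.1).1
    have e2 := ((memG _ _).1 h2.1).1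
    rcases (mono r r' c e1 e2 h).lt_or_eq with h3 | h3
    · exact h2.2.1 ⟨r, e1, h3⟩
    · exact h1.2.2 ⟨r', e2, h3.symm, h⟩
  have lt_of : ∀ r c g, (r, c) ∈ E → γ r < g → r < s g := fun r c g h h' => (hγ _ _ h _).1 h'
  have le_of : ∀ r c g, (r, c) ∈ E → g ≤ γ r → s g ≤ r := fun r c g h h' =>
    not_lt.1 fun h'' => absurd ((hγ _ _ h _).2 h'') (not_lt.2 h')
  have hS1 : S1.card ≤ 3 * m := by
    apply rowBound hE a m (fun e he => hrG e (Finset.mem_filter.1 he).1)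
    intro r
    refine ⟨s (γ r), r, s (γ r + 1), fun c hc => ?_⟩
    simp only [S1, Finset.mem_filter] at hc
    obtain ⟨h0, ⟨q1, h1, h1'⟩, ⟨q2, h2, h2'⟩, ⟨q3, h3, h3', h3''⟩⟩ := hc
    have h0 := ((memG _ _).1 h0).1
    exact ⟨⟨q1, lt_of _ _ _ h1 h1', h1⟩, ⟨q3, le_of _ _ _ h3 h3'.ge, h3'', h3⟩,
      ⟨r, le_rfl, lt_of _ _ _ h0 (Nat.lt_succ_self _), h0⟩, ⟨q2, le_of _ _ _ h2 h2', h2⟩⟩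
  have hS2 : S2.card ≤ 3 * m := by
    apply rowBound hE a m (fun e he => hrG e (Finset.mem_filter.1 he).1)
    intro r
    refine ⟨r, r + 1, s (γ r + 1), fun c hc => ?_⟩
    simp only [S2, Finset.mem_filter] at hc
    obtain ⟨h0, ⟨q2, h2, h2'⟩, ⟨q3, h3, h3', h3''⟩, ⟨q4, h4, h4', h4''⟩⟩ := hc
    have h0 := ((memG _ _).1 h0).1
    exact ⟨⟨q3, h3'', h3⟩, ⟨r, le_rfl, Nat.lt_succ_self _, h0⟩,
      ⟨q4, h4'', lt_of _ _ _ h4 (by omega), h4⟩, ⟨q2, le_of _ _ _ h2 h2', h2⟩⟩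
  have hS3 : S3.card ≤ 3 * m := by
    apply rowBound hE a m (fun e he => hrG e (Finset.mem_filter.1 he).1)
    intro r
    refine ⟨s (γ r), r, r + 1, fun c hc => ?_⟩
    simp only [S3, Finset.mem_filter] at hc
    obtain ⟨h0, ⟨q1, h1, h1'⟩, ⟨q3, h3, h3', h3''⟩, ⟨q4, h4, h4', h4''⟩⟩ := hc
    have h0 := ((memG _ _).1 h0).1
    exact ⟨⟨q1, lt_of _ _ _ h1 h1', h1⟩, ⟨q3, le_of _ _ _ h3 h3'.ge, h3'', h3⟩,
      ⟨r, le_rfl, Nat.lt_succ_self _, h0⟩, ⟨q4, h4'', h4⟩⟩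
  omega

/-- The bound `|E| ≤ C (m-1) h(m) + D |cols|`. -/
def Bnd (h : ℕ → ℕ) (C D : ℕ) : Prop :=
  ∀ m, 1 ≤ m → ∀ (a : ℕ) (E : Finset (ℕ × ℕ)), Free E → (∀ e ∈ E, a ≤ e.1 ∧ e.1 < a + m) →
    E.card ≤ C * ((m - 1) * h m) + D * (E.image Prod.snd).card

lemma sumMin (m t k : ℕ) :
    ∑ g ∈ Finset.range k, (min t (m - g * t) - 1) + (m - k * t - 1) ≤ m - 1 := by
  induction k with
  | zero => simp
  | succ k ih =>
    rw [Finset.sum_range_succ, Nat.succ_mul]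
    omega

open Classical in
lemma localBound {E : Finset (ℕ × ℕ)} (hE : Free E) (a m t C D H : ℕ) (ht : 1 ≤ t) (hm : 1 ≤ m)
    (hr : ∀ e ∈ E, a ≤ e.1 ∧ e.1 < a + m)
    (hcol : ∀ r r' c, (r, c) ∈ E → (r', c) ∈ E → (r - a) / t = (r' - a) / t)
    (IH : ∀ m', 1 ≤ m' → m' ≤ t → ∀ (a : ℕ) (E : Finset (ℕ × ℕ)), Free E →
      (∀ e ∈ E, a ≤ e.1 ∧ e.1 < a + m') →
      E.card ≤ C * ((m' - 1) * H) + D * (E.image Prod.snd).card) :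
    E.card ≤ C * ((m - 1) * H) + D * (E.image Prod.snd).card := by
  let k := (m - 1) / t + 1
  have hk : ∀ e ∈ E, (e.1 - a) / t ∈ Finset.range k := by
    intro e he
    have := hr e he
    simp only [k, Finset.mem_range, Nat.lt_succ_iff]
    exact Nat.div_le_div_right (by omega)
  have h1 : E.card = ∑ g ∈ Finset.range k, (E.filter (fun e => (e.1 - a) / t = g)).card :=
    Finset.card_eq_sum_card_fiberwise hk
  have h2 : ∑ g ∈ Finset.range k, ((E.filter (fun e => (e.1 - a) / t = g)).image Prod.snd).card
      ≤ (E.image Prod.snd).card := by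
    rw [← Finset.card_biUnion]
    · apply Finset.card_le_card
      intro c
      simp only [Finset.mem_biUnion, Finset.mem_image, Finset.mem_filter]
      rintro ⟨g, _, e, he, h⟩
      exact ⟨e, he.1, h⟩
    · intro g _ g' _ hne
      refine Finset.disjoint_left.2 fun c hc hc' => hne ?_
      simp only [Finset.mem_image, Finset.mem_filter] at hc hc'
      obtain ⟨⟨r, c1⟩, ⟨h1, h2⟩, h3⟩ := hc
      obtain ⟨⟨r', c2⟩, ⟨h1', h2'⟩, h3'⟩ := hc'
      simp only at h2 h3 h2' h3'
      subst h3 h3'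
      rw [← h2, ← h2']
      exact hcol _ _ _ h1 h1'
  have h3 : ∀ g ∈ Finset.range k, (E.filter (fun e => (e.1 - a) / t = g)).card ≤
      C * ((min t (m - g * t) - 1) * H)
        + D * ((E.filter (fun e => (e.1 - a) / t = g)).image Prod.snd).card := by
    intro g hg
    have hg' : g * t ≤ m - 1 := by
      have : g ≤ (m - 1) / t := by simp only [k, Finset.mem_range] at hg; omega
      exact (Nat.le_div_iff_mul_le ht).1 this
    refine IH _ (by omega) (min_le_left _ _) (a + g * t) _
      (hE.mono (Finset.filter_subset _ _)) ?_
    intro e he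
    simp only [Finset.mem_filter] at he
    have h5 := hr e he.1
    have h6 := Nat.div_mul_le_self (e.1 - a) t
    have h7 := Nat.lt_mul_div_succ (e.1 - a) (show 0 < t from ht)
    rw [he.2] at h6 h7
    rw [Nat.mul_comm, Nat.succ_mul] at h7
    omega
  rw [h1]
  refine (Finset.sum_le_sum h3).trans ?_
  rw [Finset.sum_add_distrib, ← Finset.mul_sum, ← Finset.mul_sum, ← Finset.sum_mul]
  have h4 := sumMin m t k
  gcongr
  omega

open Classical in
/-- Main recursive step. -/
lemma step (f h : ℕ → ℕ) (C D : ℕ) (hD : 1 ≤ D) (hf1 : ∀ m, 2 ≤ m → 1 ≤ f m)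
    (hf2 : ∀ m, 2 ≤ m → f m < m) (hmono : Monotone h)
    (hh : ∀ m, 2 ≤ m → h m = 1 + h (f m))
    (hyp : ∀ m, 2 ≤ m → ∀ (E : Finset (ℕ × ℕ)), Free E →
      (∀ e ∈ E, e.1 < (m - 1) / f m + 1) → E.card ≤ C * (m - 1) + D * (E.image Prod.snd).card) :
    Bnd h (C + 18) (D + 2) := by
  intro m
  induction m using Nat.strong_induction_on with
  | _ m ih =>
  intro hm a E hE hr
  rcases Nat.lt_or_ge m 2 with hm2 | hm2
  · have hm1 : m = 1 := by omega
    subst hm1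
    have : E.card ≤ (E.image Prod.snd).card := by
      apply Finset.card_le_card_of_injOn Prod.snd (fun e he => Finset.mem_image_of_mem _ he)
      intro e he e' he' h
      have := hr e he
      have := hr e' he'
      ext
      · omega
      · exact h
    refine this.trans (le_trans ?_ (Nat.le_add_left _ _))
    exact Nat.le_mul_of_pos_left _ (by omega)
  set t := f m with ht
  have t1 := hf1 m hm2
  have t2 := hf2 m hm2
  let γ : ℕ → ℕ := fun r => (r - a) / t
  let s : ℕ → ℕ := fun g => a + g * t
  have hγ : ∀ r c, (r, c) ∈ E → ∀ g, γ r < g ↔ r < s g := by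
    intro r c h g
    have := hr _ h
    simp only at this
    simp only [γ, s, Nat.div_lt_iff_lt_mul (show 0 < t from t1)]
    omega
  set G := glob γ E with hG
  let L := E.filter (fun e => ¬ ∃ r, (r, e.2) ∈ E ∧ γ r ≠ γ e.1)
  have hGE : G ⊆ E := Finset.filter_subset _ _
  have hLE : L ⊆ E := Finset.filter_subset _ _
  have hcard : E.card = G.card + L.card := by
    rw [hG]; exact (Finset.card_filter_add_card_filter_not _).symm
  have hg := globBound hE γ s hγ a m hr
  rw [← hG] at hg
  have hcolsG : ((contr γ G).image Prod.snd) = G.image Prod.snd := by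
    simp [contr, Finset.image_image, Function.comp_def]
  have hc := hyp m hm2 (contr γ G)
    ((hE.mono hGE).contr γ s fun r c h => hγ r c (hGE h)) ?_
  swap
  · intro e he
    simp only [contr, Finset.mem_image] at he
    obtain ⟨e', h1, rfl⟩ := he
    have := hr e' (hGE h1)
    simp only [γ, Nat.lt_succ_iff]
    exact Nat.div_le_div_right (by omega)
  rw [hcolsG] at hc
  have hl := localBound (hE.mono hLE) a m t (C + 18) (D + 2) (h t) t1 hm
    (fun e he => hr e (hLE he)) ?_ ?_
  rotate_left
  · intro r r' c h1 h2
    by_contra h3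
    exact (Finset.mem_filter.1 h2).2 ⟨r, hLE h1, h3⟩
  · intro m' h1 h2 a' E' hE' hr'
    refine (ih m' (by omega) h1 a' E' hE' hr').trans ?_
    gcongr
    exact hmono h2
  have hcols : (G.image Prod.snd).card + (L.image Prod.snd).card ≤ (E.image Prod.snd).card := by
    rw [← Finset.card_union_of_disjoint]
    · apply Finset.card_le_card
      exact Finset.union_subset (Finset.image_subset_image hGE) (Finset.image_subset_image hLE)
    · refine Finset.disjoint_left.2 fun c hc hc' => ?_
      simp only [Finset.mem_image] at hc hc'
      obtain ⟨⟨r, c1⟩, h1, rfl⟩ := hc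
      obtain ⟨⟨r', c2⟩, h2, h3⟩ := hc'
      simp only at h3
      subst h3
      obtain ⟨h4, q, h5, h6⟩ := Finset.mem_filter.1 h1
      have h7 := (Finset.mem_filter.1 h2).2
      push Not at h7
      exact h6 ((h7 q h5).trans (h7 r h4).symm)
  rw [hh m hm2, ← ht]
  have e1 : (C + 18) * ((m - 1) * (1 + h t)) = (C + 18) * ((m - 1) * h t) + C * (m - 1)
      + 18 * (m - 1) := by ring
  have e2 : (D + 2) * ((G.image Prod.snd).card + (L.image Prod.snd).card) ≤
    (D + 2) * (E.image Prod.snd).card := Nat.mul_le_mul_left _ hcols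
  rw [e1]
  have e3 : (D + 2) * ((G.image Prod.snd).card + (L.image Prod.snd).card) =
    D * (G.image Prod.snd).card + 2 * (G.image Prod.snd).card
      + (D + 2) * (L.image Prod.snd).card := by ring
  omega

/-! ### Properties of the hierarchy -/

lemma iterCount_fuel (f : ℕ → ℕ) (hf : ∀ m, 2 ≤ m → f m < m) :
    ∀ k m, m ≤ k → iterCount f k m = iterCount f m m := by
  have : ∀ m k k', m ≤ k → m ≤ k' → iterCount f k m = iterCount f k' m := by
    intro m
    induction m using Nat.strong_induction_on with
    | _ m ih =>
    intro k k' hk hk'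
    rcases Nat.lt_or_ge m 2 with h | h
    · have h' : m ≤ 1 := by omega
      cases k <;> cases k' <;> simp [iterCount, h']
    · obtain ⟨k, rfl⟩ : ∃ q, k = q + 1 := ⟨k - 1, by omega⟩
      obtain ⟨k', rfl⟩ : ∃ q, k' = q + 1 := ⟨k' - 1, by omega⟩
      have := hf m h
      simp only [iterCount]
      rw [ih (f m) this k k' (by omega) (by omega)]
  exact fun k m h => this m k m h le_rfl

lemma iterCount_step (f : ℕ → ℕ) (hf : ∀ m, 2 ≤ m → f m < m) (m : ℕ) (hm : 2 ≤ m) :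
    iterCount f m m = 1 + iterCount f (f m) (f m) := by
  obtain ⟨k, rfl⟩ : ∃ q, m = q + 1 := ⟨m - 1, by omega⟩
  have := hf _ hm
  rw [iterCount, if_neg (by omega), iterCount_fuel f hf k _ (by omega)]

lemma iterCount_small (f : ℕ → ℕ) (m : ℕ) (hm : m ≤ 1) : iterCount f m m = 0 := by
  cases m <;> simp [iterCount] <;> omega

lemma iterCount_lt (f : ℕ → ℕ) (hf : ∀ m, 2 ≤ m → f m < m) (hf1 : ∀ m, 2 ≤ m → 1 ≤ f m)
    (m : ℕ) (hm : 1 ≤ m) : iterCount f m m < m := by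
  induction m using Nat.strong_induction_on with
  | _ m ih =>
  rcases Nat.lt_or_ge m 2 with h | h
  · rw [iterCount_small f m (by omega)]; omega
  · rw [iterCount_step f hf m h]
    have := hf m h
    have := ih _ this (hf1 m h)
    omega

lemma iterCount_mono (f : ℕ → ℕ) (hf : ∀ m, 2 ≤ m → f m < m) (hm : Monotone f) :
    Monotone (fun m => iterCount f m m) := by
  have : ∀ n m, m ≤ n → iterCount f m m ≤ iterCount f n n := by
    intro n
    induction n using Nat.strong_induction_on with
    | _ n ih =>
    intro m hmn
    rcases Nat.lt_or_ge m 2 with h | h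
    · rw [iterCount_small f m (by omega)]; omega
    · rw [iterCount_step f hf m h, iterCount_step f hf n (by omega)]
      exact Nat.add_le_add_left (ih _ (hf n (by omega)) _ (hm hmn)) _
  exact fun m n h => this n m h

lemma alpha_props (d : ℕ) : (∀ m, 2 ≤ m → alphaHier (d + 1) m < m) ∧
    (∀ m, 2 ≤ m → 1 ≤ alphaHier (d + 1) m) ∧ Monotone (alphaHier (d + 1)) := by
  induction d with
  | zero =>
    refine ⟨fun m hm => ?_, fun m hm => ?_, fun m n h => ?_⟩ <;> simp only [alphaHier] <;> omega
  | succ d ih =>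
    obtain ⟨h1, h2, h3⟩ := ih
    refine ⟨fun m hm => ?_, fun m hm => ?_, ?_⟩
    · exact iterCount_lt _ h1 h2 m (by omega)
    · have := iterCount_step _ h1 m hm
      simp only [alphaHier]; omega
    · exact iterCount_mono _ h1 h3

lemma alpha_step (d m : ℕ) (hm : 2 ≤ m) :
    alphaHier (d + 2) m = 1 + alphaHier (d + 2) (alphaHier (d + 1) m) := by
  simp only [alphaHier]
  exact iterCount_step _ (alpha_props d).1 m hm

lemma alpha_sub_two (d : ℕ) : ∀ m, 4 ≤ m → alphaHier (d + 1) m + 2 ≤ m := by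
  induction d with
  | zero => intro m hm; simp only [alphaHier]; omega
  | succ d ih =>
    intro m hm
    rw [alpha_step d m (by omega)]
    have h1 := ih m hm
    rcases Nat.lt_or_ge (alphaHier (d + 1) m) 2 with h | h
    · have := (alpha_props (d + 1)).2.2 (show alphaHier (d + 1) m ≤ 2 by omega)
      have := (alpha_props (d + 1)).1 2 le_rfl
      simp only [Nat.add_assoc, Nat.reduceAdd] at *
      omega
    · have := (alpha_props (d + 1)).1 _ h
      simp only [Nat.add_assoc, Nat.reduceAdd] at *
      omega

lemma alpha_le (d m : ℕ) : alphaHier (d + 1) m ≤ max 3 (m - d) := by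
  induction d with
  | zero => simp only [alphaHier]; omega
  | succ d ih =>
    rcases Nat.lt_or_ge m 2 with hm | hm
    · have := (alpha_props (d + 1)).2.2 (show m ≤ 2 by omega)
      have := (alpha_props (d + 1)).1 2 le_rfl
      simp only [Nat.add_assoc, Nat.reduceAdd] at *
      omega
    rw [alpha_step d m hm]
    rcases Nat.lt_or_ge (alphaHier (d + 1) m) 4 with h | h
    · have := (alpha_props (d + 1)).2.2 (show alphaHier (d + 1) m ≤ 3 by omega)
      have := (alpha_props (d + 1)).1 3 (by omega)
      simp only [Nat.add_assoc, Nat.reduceAdd] at *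
      omega
    · have := alpha_sub_two (d + 1) _ h
      simp only [Nat.add_assoc, Nat.reduceAdd] at *
      omega

lemma invAck_spec (m : ℕ) : 1 ≤ invAck m ∧ alphaHier (invAck m) m ≤ 3 := by
  have : invAck m ∈ {k : ℕ | 1 ≤ k ∧ alphaHier k m ≤ 3} := by
    apply Nat.sInf_mem
    exact ⟨m + 1, by omega, (alpha_le m m).trans (by simp)⟩
  exact this

lemma bnd_alpha (d : ℕ) : Bnd (alphaHier (d + 2)) (18 * (d + 1)) (2 * (d + 2)) := by
  induction d with
  | zero =>
    have := step (alphaHier 1) (alphaHier 2) 0 2 (by omega) (alpha_props 0).2.1 (alpha_props 0).1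
      (alpha_props 1).2.2 (alpha_step 0) ?_
    · simpa using this
    · intro m hm E hE hr
      have hb : (m - 1) / alphaHier 1 m < 2 := by
        simp only [alphaHier]
        rw [Nat.div_lt_iff_lt_mul (by omega)]
        omega
      have : E ⊆ Finset.range 2 ×ˢ E.image Prod.snd := by
        intro e he
        have := hr e he
        exact Finset.mem_product.2 ⟨Finset.mem_range.2 (by omega), Finset.mem_image_of_mem _ he⟩
      have := Finset.card_le_card this
      rw [Finset.card_product, Finset.card_range] at this
      omega
  | succ d ih =>
    refine step (alphaHier (d + 2)) (alphaHier (d + 3)) (18 * (d + 1)) (2 * (d + 2)) (by omega)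
      (alpha_props (d + 1)).2.1 (alpha_props (d + 1)).1
      (alpha_props (d + 2)).2.2 (alpha_step (d + 1)) ?_
    intro m hm E hE hr
    have h1 := (alpha_props (d + 1)).2.1 m hm
    set b := (m - 1) / alphaHier (d + 2) m with hb
    have h2 := ih (b + 1) (Nat.le_add_left _ _) 0 E hE (fun e he => by have := hr e he; omega)
    refine h2.trans ?_
    gcongr
    have h3 : b + 1 ≤ m := by
      have := Nat.div_le_self (m - 1) (alphaHier (d + 2) m)
      rw [← hb] at this
      clear_value b
      omega
    calc (b + 1 - 1) * alphaHier (d + 2) (b + 1) ≤ b * alphaHier (d + 2) m :=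
          Nat.mul_le_mul (Nat.le_of_eq rfl) ((alpha_props (d + 1)).2.2 h3)
      _ ≤ m - 1 := Nat.div_mul_le_self _ _

/-! ### Matrices -/

/-- Entry set of a matrix. -/
def ent {n : ℕ} (M : Fin n → Fin n → Bool) : Finset (ℕ × ℕ) :=
  (Finset.univ.filter (fun p : Fin n × Fin n => M p.1 p.2 = true)).image
    (fun p => (p.1.val, p.2.val))

lemma card_ent {n : ℕ} (M : Fin n → Fin n → Bool) : (ent M).card = matOnes M := by
  rw [ent, Finset.card_image_of_injective, matOnes, Nat.card_eq_fintype_card, Fintype.card_subtype]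
  rintro ⟨a, b⟩ ⟨c, d⟩ h
  simp only [Prod.mk.injEq, Fin.val_inj] at h
  ext <;> simp [h]

lemma mem_ent {n : ℕ} (M : Fin n → Fin n → Bool) (r c : ℕ) :
    (r, c) ∈ ent M ↔ ∃ (h : r < n) (h' : c < n), M ⟨r, h⟩ ⟨c, h'⟩ = true := by
  simp only [ent, Finset.mem_image, Finset.mem_filter, Finset.mem_univ, true_and, Prod.mk.injEq]
  constructor
  · rintro ⟨⟨a, b⟩, h, rfl, rfl⟩
    exact ⟨a.2, b.2, h⟩
  · rintro ⟨h, h', e⟩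
    exact ⟨(⟨r, h⟩, ⟨c, h'⟩), e, rfl, rfl⟩

lemma free_ent {n : ℕ} (M : Fin n → Fin n → Bool) (hM : ¬ IsFull 4 M) : Free (ent M) := by
  intro x y z T hT
  by_contra hcard
  apply hM
  obtain ⟨T', hT', hc'⟩ := Finset.exists_subset_card_eq (show 4 ≤ T.card by omega)
  have hlt : ∀ b, T'.orderEmbOfFin hc' b < n := by
    intro b
    obtain ⟨⟨r, _, h⟩, _⟩ := hT _ (hT' (T'.orderEmbOfFin_mem hc' b))
    exact ((mem_ent _ _ _).1 h).2.1
  let c : Fin 4 → Fin n := fun b => ⟨T'.orderEmbOfFin hc' b, hlt b⟩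
  refine ⟨c, ?_, ?_⟩
  · intro i j h
    exact (T'.orderEmbOfFin hc').strictMono h
  intro σ
  have key : ∀ b, Blk (ent M) x y z (c b).val := fun b =>
    hT _ (hT' (T'.orderEmbOfFin_mem hc' b))
  obtain ⟨q0, a0, b0⟩ := (key (σ.symm 0)).1
  obtain ⟨q1, a1, a1', b1⟩ := (key (σ.symm 1)).2.1
  obtain ⟨q2, a2, a2', b2⟩ := (key (σ.symm 2)).2.2.1
  obtain ⟨q3, a3, b3⟩ := (key (σ.symm 3)).2.2.2
  obtain ⟨l0, _, m0⟩ := (mem_ent _ _ _).1 b0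
  obtain ⟨l1, _, m1⟩ := (mem_ent _ _ _).1 b1
  obtain ⟨l2, _, m2⟩ := (mem_ent _ _ _).1 b2
  obtain ⟨l3, _, m3⟩ := (mem_ent _ _ _).1 b3
  let r : Fin 4 → Fin n := ![⟨q0, l0⟩, ⟨q1, l1⟩, ⟨q2, l2⟩, ⟨q3, l3⟩]
  have hr : ∀ k, M (r k) (c (σ.symm k)) = true := by
    intro k
    fin_cases k
    · exact m0
    · exact m1
    · exact m2
    · exact m3
  refine ⟨r, ?_, fun b => ?_⟩
  · rw [Fin.strictMono_iff_lt_succ]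
    intro i
    fin_cases i
    · exact (show q0 < q1 by omega)
    · exact (show q1 < q2 by omega)
    · exact (show q2 < q3 by omega)
  · simpa using hr (σ b)

lemma matOnes_le {n : ℕ} (hn : 1 ≤ n) (M : Fin n → Fin n → Bool) (hM : ¬ IsFull 4 M) :
    matOnes M ≤ 60 * n * invAck n := by
  obtain ⟨h1, h2⟩ := invAck_spec n
  rw [← card_ent]
  have hrow : ∀ e ∈ ent M, 0 ≤ e.1 ∧ e.1 < 0 + n := by
    rintro ⟨r, c⟩ he
    obtain ⟨h, _⟩ := (mem_ent _ _ _).1 he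
    simpa using h
  have hcol : ((ent M).image Prod.snd).card ≤ n := by
    have : (ent M).image Prod.snd ⊆ Finset.range n := by
      intro c hc
      obtain ⟨⟨r, c'⟩, he, rfl⟩ := Finset.mem_image.1 hc
      obtain ⟨_, h, _⟩ := (mem_ent _ _ _).1 he
      simpa using h
    simpa using Finset.card_le_card this
  obtain ⟨d, hd, hd3⟩ : ∃ d, d + 1 ≤ invAck n ∧ alphaHier (d + 2) n ≤ 3 := by
    rcases Nat.lt_or_ge (invAck n) 2 with h | h
    · have h3 : invAck n = 1 := by omega
      rw [h3] at h2
      refine ⟨0, by omega, ?_⟩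
      rcases Nat.lt_or_ge n 2 with hn2 | hn2
      · have : n = 1 := by omega
        subst this
        decide
      · rw [alpha_step 0 n hn2]
        have := (alpha_props 1).2.2 h2
        have h5 : alphaHier 2 3 = 2 := by decide
        simp only [Nat.zero_add, Nat.reduceAdd] at *
        omega
    · refine ⟨invAck n - 2, by omega, ?_⟩
      rwa [Nat.sub_add_cancel h]
  have := bnd_alpha d n hn 0 (ent M) (free_ent M hM) hrow
  have e1 : 18 * (d + 1) * ((n - 1) * alphaHier (d + 2) n) ≤ 18 * invAck n * (n * 3) := by
    gcongr; omega
  have e2 : 2 * (d + 2) * ((ent M).image Prod.snd).card ≤ 4 * invAck n * n :=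
    Nat.mul_le_mul (by omega) hcol
  nlinarith

end P3

/-- There is a constant `C` such that for every `n ≥ 1`,
`p₃(n) ≤ C·n·α(n)`. -/
theorem p3_upper_bound :
    ∃ C : ℝ, ∀ n : ℕ, 1 ≤ n → (pFull 3 n : ℝ) ≤ C * (n : ℝ) * (invAck n : ℝ) := by
  refine ⟨60, fun n hn => ?_⟩
  have h : pFull 3 n ≤ 60 * n * invAck n := by
    apply csSup_le'
    rintro x ⟨M, hM, rfl⟩
    exact P3.matOnes_le hn M hM
  exact_mod_cast h
end

section
/- For every fixed even integer k ≥ 4, with t := ⌊(k−2)/2⌋ = (k−2)/2, there exists a constant C_k such that for every integer n ≥ 1, the maximum number p_k(n) of 1-entries in an n×n (0,1)-matrix that is not (k+1)-full satisfies p_k(n) ≤ n·2^{(1/t!)·α(n)^t + C_k·α(n)^{t−1}}. -/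
/-! ## Combinatorial part -/

/-- Values of a monotone function hit by all columns of `T`: fewer than `r` columns. -/
def NoForm (r s : ℕ) {ι : Type} (I : Finset ι) (S : ι → Finset ℕ) : Prop :=
  ∀ g : ℕ → ℕ, Monotone g → ∀ T : Finset ι, T ⊆ I →
    (∀ j ∈ T, ∀ i < s, ∃ x ∈ S j, g x = i) → T.card < r

/-- Linear bound for the number of columns. -/
def LinB (r s q M L : ℕ) : Prop :=
  ∀ (ι : Type) (I : Finset ι) (S : ι → Finset ℕ) (a m : ℕ), m ≤ M →
    (∀ j ∈ I, S j ⊆ Finset.Ico a (a + m)) → (∀ j ∈ I, q < (S j).card) →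
    NoForm r s I S → I.card ≤ L * m

lemma LinB.mono_L {r s q M L L' : ℕ} (h : LinB r s q M L) (hL : L ≤ L') : LinB r s q M L' := by
  intro ι I S a m hm h1 h2 h3
  exact (h ι I S a m hm h1 h2 h3).trans (Nat.mul_le_mul_right _ hL)

lemma linB_two (r M : ℕ) : LinB r 2 1 M r := by
  classical
  intro ι I S a m _ h1 h2 h3
  have hex : ∀ j ∈ I, ∃ x ∈ S j, ∃ y ∈ S j, x < y := by
    intro j hj
    obtain ⟨x, hx, y, hy, hxy⟩ := Finset.one_lt_card.1 (h2 j hj)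
    rcases lt_or_gt_of_ne hxy with h | h
    · exact ⟨x, hx, y, hy, h⟩
    · exact ⟨y, hy, x, hx, h⟩
  let f : ι → ℕ := fun j => if h : j ∈ I then (hex j h).choose else 0
  have hf : ∀ j ∈ I, f j ∈ S j ∧ ∃ y ∈ S j, f j < y := by
    intro j hj
    have := (hex j hj).choose_spec
    simpa [f, hj] using this
  have hc := Finset.card_le_mul_card_image_of_maps_to (s := I) (t := Finset.Ico a (a + m)) (f := f)
    (fun j hj => h1 j hj (hf j hj).1) r ?_
  · simpa using hc
  · intro x _
    apply le_of_lt
    refine h3 (fun y => if y ≤ x then 0 else 1) ?_ _ (Finset.filter_subset _ _) ?_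
    · intro y z hyz
      try dsimp only
      split_ifs <;> omega
    · intro j hj i hi
      rw [Finset.mem_filter] at hj
      obtain ⟨hj, rfl⟩ := hj
      obtain ⟨hx, y, hy, hxy⟩ := hf j hj
      interval_cases i
      · exact ⟨_, hx, by simp⟩
      · exact ⟨y, hy, by simp [hxy]⟩

lemma linB_three (r M : ℕ) : LinB r 3 2 M r := by
  classical
  intro ι I S a m _ h1 h2 h3
  have hex : ∀ j ∈ I, ∃ x ∈ S j, (∃ y ∈ S j, x < y) ∧ ∃ z ∈ S j, z < x := by
    intro j hj
    obtain ⟨x, y, z, hx, hy, hz, hxy, hxz, hyz⟩ := Finset.two_lt_card_iff.1 (h2 j hj)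
    have key : (y < x ∧ x < z) ∨ (z < x ∧ x < y) ∨ (x < y ∧ y < z) ∨ (z < y ∧ y < x) ∨
      (x < z ∧ z < y) ∨ (y < z ∧ z < x) := by omega
    rcases key with ⟨p, q⟩ | ⟨p, q⟩ | ⟨p, q⟩ | ⟨p, q⟩ | ⟨p, q⟩ | ⟨p, q⟩
    · exact ⟨x, hx, ⟨z, hz, q⟩, ⟨y, hy, p⟩⟩
    · exact ⟨x, hx, ⟨y, hy, q⟩, ⟨z, hz, p⟩⟩
    · exact ⟨y, hy, ⟨z, hz, q⟩, ⟨x, hx, p⟩⟩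
    · exact ⟨y, hy, ⟨x, hx, q⟩, ⟨z, hz, p⟩⟩
    · exact ⟨z, hz, ⟨y, hy, q⟩, ⟨x, hx, p⟩⟩
    · exact ⟨z, hz, ⟨x, hx, q⟩, ⟨y, hy, p⟩⟩
  let f : ι → ℕ := fun j => if h : j ∈ I then (hex j h).choose else 0
  have hf : ∀ j ∈ I, f j ∈ S j ∧ (∃ y ∈ S j, f j < y) ∧ ∃ z ∈ S j, z < f j := by
    intro j hj
    have := (hex j hj).choose_spec
    simpa [f, hj] using this
  have hc := Finset.card_le_mul_card_image_of_maps_to (s := I) (t := Finset.Ico a (a + m)) (f := f)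
    (fun j hj => h1 j hj (hf j hj).1) r ?_
  · simpa using hc
  · intro x _
    apply le_of_lt
    refine h3 (fun y => if y < x then 0 else if y ≤ x then 1 else 2) ?_ _
      (Finset.filter_subset _ _) ?_
    · intro y z hyz
      try dsimp only
      split_ifs <;> omega
    · intro j hj i hi
      rw [Finset.mem_filter] at hj
      obtain ⟨hj, rfl⟩ := hj
      obtain ⟨hx, ⟨y, hy, hxy⟩, z, hz, hxz⟩ := hf j hj
      interval_cases i
      · exact ⟨z, hz, by simp [hxz]⟩
      · exact ⟨_, hx, by simp⟩
      · exact ⟨y, hy, by rw [if_neg (by omega), if_neg (by omega)]⟩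

lemma nth_side (X : Finset ℕ) (i : ℕ) (hi : i < X.card) :
    ∀ hf : (Set.ofPred (· ∈ X)).Finite, i < hf.toFinset.card := by
  intro hf
  have : hf.toFinset = X := by
    ext x
    rw [Set.Finite.mem_toFinset]
    rfl
  rw [this]
  exact hi

/-- Trivial bound for a bounded number of rows. -/
lemma linB_triv (r s q M L : ℕ) (hs : s ≤ q + 1) (hL : r * 2 ^ M ≤ L) : LinB r s q M L := by
  classical
  intro ι I S a m hm h1 h2 h3
  rcases Nat.eq_zero_or_pos m with rfl | hm0
  · have : I = ∅ := by
      rw [Finset.eq_empty_iff_forall_notMem]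
      intro j hj
      have h := h1 j hj
      have h' := Finset.card_le_card h
      have := h2 j hj
      rw [Nat.add_zero, Finset.Ico_self, Finset.card_empty] at h'
      omega
    simp [this]
  have hc := Finset.card_le_mul_card_image_of_maps_to (s := I)
    (t := (Finset.Ico a (a + m)).powerset) (f := S)
    (fun j hj => Finset.mem_powerset.2 (h1 j hj)) r ?_
  · rw [Finset.card_powerset, Nat.card_Ico, Nat.add_sub_cancel_left] at hc
    calc I.card ≤ r * 2 ^ m := hc
      _ ≤ r * 2 ^ M := Nat.mul_le_mul_left _ (Nat.pow_le_pow_right (by norm_num) hm)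
      _ ≤ L := hL
      _ ≤ L * m := Nat.le_mul_of_pos_right _ hm0
  · intro X _
    apply le_of_lt
    refine h3 (Nat.count (· ∈ X)) (Nat.count_monotone _) _ (Finset.filter_subset _ _) ?_
    intro j hj i hi
    rw [Finset.mem_filter] at hj
    obtain ⟨hj, rfl⟩ := hj
    have h2' := h2 j hj
    have hlt := nth_side (S j) i (by omega)
    exact ⟨Nat.nth (· ∈ S j) i, Nat.nth_mem i hlt, Nat.count_nth hlt⟩

/-- Recursion. -/
lemma linB_rec {r s q q1 q2 q0 W B Ls L1 L2 L0 : ℕ} (hW : 1 ≤ W)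
    (hs : LinB r (s + 2) q W Ls) (hs1 : LinB r (s + 1) q1 W L1) (hs2 : LinB r s q2 W L2)
    (hs0 : LinB r (s + 2) q0 B L0) (hq : 2 * q1 + q2 * q0 ≤ q)
    (ι : Type) (I : Finset ι) (S : ι → Finset ℕ) (a m b : ℕ) (hmb : m ≤ b * W) (hbB : b ≤ B)
    (h1 : ∀ j ∈ I, S j ⊆ Finset.Ico a (a + m)) (h2 : ∀ j ∈ I, q < (S j).card)
    (h3 : NoForm r (s + 2) I S) : I.card ≤ (Ls + 2 * L1 + L2) * m + L0 * b := by
  classical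
  let bl : ℕ → ℕ := fun x => (x - a) / W
  have hblm : Monotone bl := fun x y h => Nat.div_le_div_right (by omega)
  have hblb : ∀ j ∈ I, ∀ x ∈ S j, bl x < b := by
    intro j hj x hx
    have := Finset.mem_Ico.1 (h1 j hj hx)
    apply (Nat.div_lt_iff_lt_mul hW).2
    omega
  let F : ℕ → ι → Finset ℕ := fun i j => (S j).filter (fun x => bl x = i)
  let mi : ℕ → ℕ := fun i => min ((i + 1) * W) m - min (i * W) m
  have hmi : ∀ i, mi i ≤ W := by
    intro i
    simp only [mi, Nat.add_mul, Nat.one_mul]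
    omega
  have hmono : Monotone (fun i => min (i * W) m) := by
    intro i j hij
    have := Nat.mul_le_mul_right W hij
    dsimp only
    omega
  have hsum : ∑ i ∈ Finset.range b, mi i = m := by
    have := Finset.sum_range_tsub hmono b
    simp only [mi]
    rw [this]
    simp [hmb]
  have hF : ∀ i, ∀ j ∈ I, F i j ⊆ Finset.Ico (a + i * W) (a + i * W + mi i) := by
    intro i j hj x hx
    rw [Finset.mem_filter] at hx
    have h := Finset.mem_Ico.1 (h1 j hj hx.1)
    have hxi : (x - a) / W = i := hx.2
    have e1 : i * W ≤ x - a := by rw [← hxi]; exact Nat.div_mul_le_self _ _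
    have e2 : x - a < (i + 1) * W := by
      rw [← hxi]
      exact Nat.lt_mul_of_div_lt (Nat.lt_succ_self _) hW
    rw [Finset.mem_Ico]
    simp only [mi]
    rw [Nat.add_mul, Nat.one_mul] at e2 ⊢
    omega
  let I1 : ℕ → Finset ι := fun i => I.filter (fun j => ∀ x ∈ S j, bl x = i)
  let I2 : ℕ → Finset ι := fun i => I.filter (fun j => q1 < (F i j).card ∧ ∃ x ∈ S j, i < bl x)
  let I3 : ℕ → Finset ι := fun i => I.filter (fun j => q1 < (F i j).card ∧ ∃ x ∈ S j, bl x < i)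
  let I4 : ℕ → Finset ι := fun i => I.filter (fun j => q2 < (F i j).card ∧
    (∃ x ∈ S j, i < bl x) ∧ ∃ x ∈ S j, bl x < i)
  let I5 : Finset ι := I.filter (fun j => q0 < ((S j).image bl).card)
  have c1 : ∀ i, (I1 i).card ≤ Ls * mi i := by
    intro i
    refine hs ι (I1 i) (F i) (a + i * W) (mi i) (hmi i) ?_ ?_ ?_
    · intro j hj
      exact hF i j (Finset.mem_filter.1 hj).1
    · intro j hj
      obtain ⟨hj, hj'⟩ := Finset.mem_filter.1 hj
      have : F i j = S j := Finset.filter_true_of_mem hj'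
      rw [this]
      exact h2 j hj
    · intro g hg T hT hh
      refine h3 g hg T (hT.trans (Finset.filter_subset _ _)) ?_
      intro j hj i' hi'
      obtain ⟨x, hx, hx'⟩ := hh j hj i' hi'
      exact ⟨x, (Finset.mem_filter.1 hx).1, hx'⟩
  have c2 : ∀ i, (I2 i).card ≤ L1 * mi i := by
    intro i
    refine hs1 ι (I2 i) (F i) (a + i * W) (mi i) (hmi i) ?_ ?_ ?_
    · intro j hj
      exact hF i j (Finset.mem_filter.1 hj).1
    · intro j hj
      exact (Finset.mem_filter.1 hj).2.1
    · intro g hg T hT hh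
      refine h3 (fun x => if bl x ≤ i then min (g x) s else s + 1) ?_ T
        (hT.trans (Finset.filter_subset _ _)) ?_
      · intro x y hxy
        have e1 := hg hxy
        have e2 := hblm hxy
        try dsimp only
        split_ifs <;> omega
      · intro j hj i' hi'
        rcases Nat.lt_or_ge i' (s + 1) with h | h
        · obtain ⟨x, hx, hx'⟩ := hh j hj i' h
          obtain ⟨hx1, hx2⟩ := Finset.mem_filter.1 hx
          refine ⟨x, hx1, ?_⟩
          try dsimp only
          split_ifs <;> omega
        · obtain ⟨x, hx, hx'⟩ := (Finset.mem_filter.1 (hT hj)).2.2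
          refine ⟨x, hx, ?_⟩
          try dsimp only
          split_ifs <;> omega
  have c3 : ∀ i, (I3 i).card ≤ L1 * mi i := by
    intro i
    refine hs1 ι (I3 i) (F i) (a + i * W) (mi i) (hmi i) ?_ ?_ ?_
    · intro j hj
      exact hF i j (Finset.mem_filter.1 hj).1
    · intro j hj
      exact (Finset.mem_filter.1 hj).2.1
    · intro g hg T hT hh
      refine h3 (fun x => if bl x < i then 0 else g x + 1) ?_ T
        (hT.trans (Finset.filter_subset _ _)) ?_
      · intro x y hxy
        have e1 := hg hxy
        have e2 := hblm hxy
        try dsimp only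
        split_ifs <;> omega
      · intro j hj i' hi'
        rcases Nat.eq_zero_or_pos i' with h | h
        · obtain ⟨x, hx, hx'⟩ := (Finset.mem_filter.1 (hT hj)).2.2
          refine ⟨x, hx, ?_⟩
          try dsimp only
          split_ifs
          omega
        · obtain ⟨x, hx, hx'⟩ := hh j hj (i' - 1) (by omega)
          obtain ⟨hx1, hx2⟩ := Finset.mem_filter.1 hx
          refine ⟨x, hx1, ?_⟩
          try dsimp only
          split_ifs <;> omega
  have c4 : ∀ i, (I4 i).card ≤ L2 * mi i := by
    intro i
    refine hs2 ι (I4 i) (F i) (a + i * W) (mi i) (hmi i) ?_ ?_ ?_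
    · intro j hj
      exact hF i j (Finset.mem_filter.1 hj).1
    · intro j hj
      exact (Finset.mem_filter.1 hj).2.1
    · intro g hg T hT hh
      refine h3 (fun x => if bl x < i then 0 else if bl x ≤ i then min (g x + 1) s else s + 1) ?_ T
        (hT.trans (Finset.filter_subset _ _)) ?_
      · intro x y hxy
        have e1 := hg hxy
        have e2 := hblm hxy
        try dsimp only
        split_ifs <;> omega
      · intro j hj i' hi'
        obtain ⟨⟨y, hy, hy'⟩, z, hz, hz'⟩ := (Finset.mem_filter.1 (hT hj)).2.2
        have hcase : i' = 0 ∨ i' = s + 1 ∨ (i' - 1 < s ∧ 1 ≤ i') := by omega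
        rcases hcase with h | h | ⟨h, h'⟩
        · refine ⟨z, hz, ?_⟩
          try dsimp only
          split_ifs
          omega
        · refine ⟨y, hy, ?_⟩
          try dsimp only
          split_ifs <;> omega
        · obtain ⟨x, hx, hx'⟩ := hh j hj (i' - 1) h
          obtain ⟨hx1, hx2⟩ := Finset.mem_filter.1 hx
          refine ⟨x, hx1, ?_⟩
          try dsimp only
          split_ifs <;> omega
  have c5 : I5.card ≤ L0 * b := by
    refine hs0 ι I5 (fun j => (S j).image bl) 0 b hbB ?_ ?_ ?_
    · intro j hj y hy
      obtain ⟨x, hx, rfl⟩ := Finset.mem_image.1 hy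
      rw [Finset.mem_Ico]
      have := hblb j (Finset.mem_filter.1 hj).1 x hx
      omega
    · intro j hj
      exact (Finset.mem_filter.1 hj).2
    · intro g hg T hT hh
      refine h3 (fun x => g (bl x)) (hg.comp hblm) T (hT.trans (Finset.filter_subset _ _)) ?_
      intro j hj i' hi'
      obtain ⟨y, hy, hy'⟩ := hh j hj i' hi'
      obtain ⟨x, hx, rfl⟩ := Finset.mem_image.1 hy
      exact ⟨x, hx, hy'⟩
  have hcov : I ⊆ ((Finset.range b).biUnion I1 ∪ (Finset.range b).biUnion I2 ∪
      (Finset.range b).biUnion I3 ∪ (Finset.range b).biUnion I4) ∪ I5 := by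
    intro j hj
    by_contra hcon
    simp only [Finset.mem_union, Finset.mem_biUnion, Finset.mem_range, not_or, not_exists,
      not_and] at hcon
    obtain ⟨⟨⟨⟨n1, n2⟩, n3⟩, n4⟩, n5⟩ := hcon
    have hne : ((S j).image bl).Nonempty := by
      rw [Finset.image_nonempty, ← Finset.card_pos]
      have := h2 j hj
      omega
    have hq0 : ((S j).image bl).card ≤ q0 := by
      by_contra h
      exact n5 (Finset.mem_filter.2 ⟨hj, by omega⟩)
    let lo := ((S j).image bl).min' hne
    let hi := ((S j).image bl).max' hne
    have hfib : ∀ i ∈ (S j).image bl, (F i j).card ≤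
        q2 + (if i = lo then q1 else 0) + (if i = hi then q1 else 0) := by
      intro i hi'
      obtain ⟨x0, hx0, hx0i⟩ := Finset.mem_image.1 hi'
      have hib : i < b := hx0i ▸ hblb j hj x0 hx0
      have m2 := n2 i hib
      have m3 := n3 i hib
      have m4 := n4 i hib
      have m1 := n1 i hib
      simp only [I1, I2, I3, I4, Finset.mem_filter, hj, true_and] at m1 m2 m3 m4
      by_cases hlater : ∃ x ∈ S j, i < bl x
      · have : (F i j).card ≤ q1 := by
          by_contra h
          exact m2 ⟨by omega, hlater⟩
        by_cases hearl : ∃ x ∈ S j, bl x < i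
        · have : (F i j).card ≤ q2 := by
            by_contra h
            exact m4 ⟨by omega, hlater, hearl⟩
          omega
        · have : i = lo := by
            apply le_antisymm
            · apply Finset.le_min'
              intro y hy
              obtain ⟨x, hx, rfl⟩ := Finset.mem_image.1 hy
              by_contra h
              exact hearl ⟨x, hx, by omega⟩
            · exact Finset.min'_le _ _ hi'
          rw [if_pos this]
          omega
      · have hihi : i = hi := by
            apply le_antisymm
            · exact Finset.le_max' _ _ hi'
            · apply Finset.max'_le
              intro y hy
              obtain ⟨x, hx, rfl⟩ := Finset.mem_image.1 hy
              by_contra h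
              exact hlater ⟨x, hx, by omega⟩
        by_cases hearl : ∃ x ∈ S j, bl x < i
        · have : (F i j).card ≤ q1 := by
            by_contra h
            exact m3 ⟨by omega, hearl⟩
          rw [if_pos hihi]
          omega
        · exfalso
          apply m1
          intro x hx
          by_contra h
          rcases lt_or_gt_of_ne h with h | h
          · exact hearl ⟨x, hx, h⟩
          · exact hlater ⟨x, hx, h⟩
    have htot : (S j).card = ∑ i ∈ (S j).image bl, (F i j).card :=
      Finset.card_eq_sum_card_fiberwise (fun x hx => Finset.mem_coe.2
        (Finset.mem_image_of_mem bl (Finset.mem_coe.1 hx)))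
    have hle := Finset.sum_le_sum hfib
    rw [← htot, Finset.sum_add_distrib, Finset.sum_add_distrib, Finset.sum_ite_eq',
      Finset.sum_ite_eq', if_pos (Finset.min'_mem _ hne), if_pos (Finset.max'_mem _ hne),
      Finset.sum_const, smul_eq_mul] at hle
    have := h2 j hj
    have h' := Nat.mul_le_mul_right q2 hq0
    rw [Nat.mul_comm q0] at h'
    omega
  have bU : ∀ (J : ℕ → Finset ι) (L : ℕ), (∀ i, (J i).card ≤ L * mi i) →
      ((Finset.range b).biUnion J).card ≤ L * m := by
    intro J L hJ
    calc ((Finset.range b).biUnion J).card ≤ ∑ i ∈ Finset.range b, (J i).card :=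
          Finset.card_biUnion_le
      _ ≤ ∑ i ∈ Finset.range b, L * mi i := Finset.sum_le_sum (fun i _ => hJ i)
      _ = L * m := by rw [← Finset.mul_sum, hsum]
  have t := Finset.card_le_card hcov
  have u1 := bU I1 _ c1
  have u2 := bU I2 _ c2
  have u3 := bU I3 _ c3
  have u4 := bU I4 _ c4
  have v1 := Finset.card_union_le ((Finset.range b).biUnion I1 ∪ (Finset.range b).biUnion I2 ∪
      (Finset.range b).biUnion I3 ∪ (Finset.range b).biUnion I4) I5
  have v2 := Finset.card_union_le ((Finset.range b).biUnion I1 ∪ (Finset.range b).biUnion I2 ∪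
      (Finset.range b).biUnion I3) ((Finset.range b).biUnion I4)
  have v3 := Finset.card_union_le ((Finset.range b).biUnion I1 ∪ (Finset.range b).biUnion I2)
    ((Finset.range b).biUnion I3)
  have v4 := Finset.card_union_le ((Finset.range b).biUnion I1) ((Finset.range b).biUnion I2)
  have : (Ls + 2 * L1 + L2) * m = Ls * m + 2 * (L1 * m) + L2 * m := by ring
  omega
/-! ## The Ackermann-like hierarchy and the main bound -/

/-- Ackermann-like hierarchy. -/
def ackA : ℕ → ℕ → ℕ
  | 0, _ => 2
  | _ + 1, 0 => 1
  | i + 1, j + 1 => ackA (i + 1) j * ackA i (ackA (i + 1) j)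
  termination_by i j => (i, j)

/-- Thickness thresholds. -/
def thQ : ℕ → ℕ → ℕ
  | 0, _ => 1
  | 1, _ => 2
  | u + 2, 0 => u + 3
  | u + 2, i + 1 => 2 * thQ (u + 1) (i + 1) + thQ u (i + 1) * thQ (u + 2) i
  termination_by u i => (u, i)

lemma ackA_pos_two (i j : ℕ) : 1 ≤ ackA i j ∧ (1 ≤ j → 2 ≤ ackA i j) := by
  induction i generalizing j with
  | zero => simp [ackA]
  | succ i ih =>
    induction j with
    | zero => simp [ackA]
    | succ j ihj =>
      rw [ackA]
      have h := (ih (ackA (i + 1) j)).2 ihj.1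
      have : 1 * 2 ≤ ackA (i + 1) j * ackA i (ackA (i + 1) j) := Nat.mul_le_mul ihj.1 h
      omega

lemma ackA_one (i : ℕ) : ackA i 1 = 2 := by
  induction i with
  | zero => simp [ackA]
  | succ i ih => simp [ackA, ih]

lemma thQ_ge (u : ℕ) : ∀ i, u + 1 ≤ thQ u i := by
  induction u using Nat.strong_induction_on with
  | _ u ih =>
    intro i
    match u, i, ih with
    | 0, _, _ => simp [thQ]
    | 1, _, _ => simp [thQ]
    | u + 2, 0, _ => simp [thQ]
    | u + 2, i + 1, ih =>
      have := ih (u + 1) (by omega) (i + 1)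
      rw [thQ]
      omega

lemma linB_main (r c : ℕ) (u : ℕ) : u + 2 ≤ c → ∀ i j, 1 ≤ j →
    LinB r (u + 2) (thQ u i) (ackA i j ^ c) ((r * 2 ^ (2 ^ c)) * 6 ^ u * j ^ u) := by
  have hG : r ≤ r * 2 ^ (2 ^ c) := Nat.le_mul_of_pos_right _ (by positivity)
  induction u using Nat.strong_induction_on with
  | _ u ih =>
  match u, ih with
  | 0, _ =>
    intro _ i j _
    simp only [thQ]
    exact (linB_two r _).mono_L (by simpa using hG)
  | 1, _ =>
    intro _ i j hj
    simp only [thQ]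
    refine (linB_three r _).mono_L ?_
    calc r ≤ r * 2 ^ (2 ^ c) * (6 * j) := hG.trans (Nat.le_mul_of_pos_right _ (by omega))
      _ = _ := by ring
  | u + 2, ih =>
    intro hc i
    set G := r * 2 ^ (2 ^ c) with hGd
    have htriv : ∀ i j, 1 ≤ j → LinB r (u + 2 + 2) (thQ (u + 2) i) (2 ^ c)
        (G * 6 ^ (u + 2) * j ^ (u + 2)) := by
      intro i j hj
      apply linB_triv
      · have := thQ_ge (u + 2) i
        omega
      · rw [← hGd, Nat.mul_assoc]
        exact Nat.le_mul_of_pos_right _ (by positivity)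
    induction i with
    | zero =>
      intro j hj
      have := htriv 0 j hj
      simpa [ackA] using this
    | succ i ihi =>
      intro j hj
      induction j, hj using Nat.le_induction with
      | base =>
        rw [ackA_one]
        exact htriv (i + 1) 1 le_rfl
      | succ j hj ihj =>
        set w := ackA (i + 1) j with hw
        have hw2 : 2 ≤ w := (ackA_pos_two _ _).2 hj
        set W := w ^ c with hWd
        have hW1 : 1 ≤ W := Nat.one_le_pow _ _ (by omega)
        have hs1 := ih (u + 1) (by omega) (by omega) (i + 1) j hj
        have hs2 := ih u (by omega) (by omega) (i + 1) j hj
        have hs0 := ihi w (by omega)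
        rw [← hw, ← hWd] at hs1 hs2
        intro ι I S a m hm h1 h2 h3
        rcases Nat.lt_or_ge m W with hmW | hmW
        · refine (ihj ι I S a m hmW.le h1 h2 h3).trans ?_
          gcongr
          omega
        have hA : ackA (i + 1) (j + 1) ^ c = W * (ackA i w) ^ c := by
          rw [ackA, ← hw, Nat.mul_pow]
        rw [hA] at hm
        set b := (m + W - 1) / W with hb
        have hb1 : m ≤ b * W := by
          have := Nat.lt_div_mul_add (a := m + W - 1) (b := W) (by omega)
          rw [← hb] at this
          omega
        have hb2 : b * W ≤ 2 * m := by
          have := Nat.div_mul_le_self (m + W - 1) W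
          rw [← hb] at this
          omega
        have hbB : b ≤ (ackA i w) ^ c := by
          rw [hb, ← Nat.lt_succ_iff, Nat.div_lt_iff_lt_mul (by omega), Nat.succ_mul,
            Nat.mul_comm _ W]
          omega
        have key := linB_rec (q := thQ (u + 2) (i + 1)) hW1 ihj hs1 hs2 hs0
          (by rw [thQ]) ι I S a m b hb1 hbB h1 h2 h3
        refine key.trans ?_
        have hX : 2 * (G * 6 ^ (u + 2) * w ^ (u + 2) * b) ≤ G * 6 ^ (u + 2) * m := by
          have e1 : w ^ (u + 2) * w ^ 2 ≤ W := by
            rw [← pow_add, hWd]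
            exact Nat.pow_le_pow_right (by omega) (by omega)
          have e2 : 4 ≤ w ^ 2 := by nlinarith
          have e3 : 4 * (w ^ (u + 2) * b) ≤ 2 * m := by
            calc 4 * (w ^ (u + 2) * b) ≤ w ^ 2 * (w ^ (u + 2) * b) := Nat.mul_le_mul_right _ e2
              _ = (w ^ (u + 2) * w ^ 2) * b := by ring
              _ ≤ W * b := Nat.mul_le_mul_right _ e1
              _ = b * W := Nat.mul_comm _ _
              _ ≤ 2 * m := hb2
          have e4 : 2 * (w ^ (u + 2) * b) ≤ m := by omega
          calc 2 * (G * 6 ^ (u + 2) * w ^ (u + 2) * b)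
              = G * 6 ^ (u + 2) * (2 * (w ^ (u + 2) * b)) := by ring
            _ ≤ _ := Nat.mul_le_mul_left _ e4
        have hp : j ^ (u + 2) + j ^ (u + 1) ≤ (j + 1) ^ (u + 2) := by
          calc j ^ (u + 2) + j ^ (u + 1) = j ^ (u + 1) * (j + 1) := by ring
            _ ≤ (j + 1) ^ (u + 1) * (j + 1) := by gcongr; omega
            _ = _ := by ring
        have hp1 : j ^ u ≤ j ^ (u + 1) := Nat.pow_le_pow_right hj (by omega)
        have hp2 : 1 ≤ j ^ (u + 1) := Nat.one_le_pow _ _ hj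
        have fin1 : 2 * ((G * 6 ^ (u + 2) * j ^ (u + 2) + 2 * (G * 6 ^ (u + 1) * j ^ (u + 1)) +
            G * 6 ^ u * j ^ u) * m) + G * 6 ^ (u + 2) * m ≤
            2 * (G * 6 ^ (u + 2) * (j + 1) ^ (u + 2) * m) := by
          have e : 2 * (36 * j ^ (u + 2) + 12 * j ^ (u + 1) + j ^ u) + 36 ≤
              2 * (36 * (j + 1) ^ (u + 2)) := by omega
          have := Nat.mul_le_mul_left (G * 6 ^ u * m) e
          calc _ = G * 6 ^ u * m * (2 * (36 * j ^ (u + 2) + 12 * j ^ (u + 1) + j ^ u) + 36) := by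
                ring
            _ ≤ _ := this
            _ = _ := by ring
        omega
/-! ## Inverse Ackermann -/

lemma iterCount_lt (f : ℕ → ℕ) (hf : ∀ m, 2 ≤ m → f m < m) :
    ∀ fuel m, 1 ≤ m → iterCount f fuel m < m := by
  intro fuel
  induction fuel with
  | zero => intro m hm; simp [iterCount]; omega
  | succ fuel ih =>
    intro m hm
    rw [iterCount]
    split_ifs with h
    · omega
    · have h1 := hf m (by omega)
      rcases Nat.eq_zero_or_pos (f m) with h0 | h0
      · rw [h0]
        have : iterCount f fuel 0 = 0 := by cases fuel <;> simp [iterCount]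
        omega
      · have := ih (f m) h0
        omega

lemma alphaHier_lt (d : ℕ) : ∀ m, 2 ≤ m → alphaHier (d + 1) m < m := by
  induction d with
  | zero => intro m hm; simp only [alphaHier]; omega
  | succ d ih =>
    intro m hm
    simp only [alphaHier]
    exact iterCount_lt _ ih m m (by omega)

lemma iterCount_fuel (f : ℕ → ℕ) (hf : ∀ m, 2 ≤ m → f m < m) :
    ∀ m fuel, m ≤ fuel → iterCount f fuel m = iterCount f m m := by
  intro m
  induction m using Nat.strong_induction_on with
  | _ m ih =>
    intro fuel hfu
    match m, fuel, hfu with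
    | 0, 0, _ => rfl
    | 0, n + 1, _ => simp [iterCount]
    | m + 1, n + 1, h =>
      rw [iterCount, iterCount]
      split_ifs with h1
      · rfl
      · have hl := hf (m + 1) (by omega)
        rw [ih (f (m + 1)) hl n (by omega), ih (f (m + 1)) hl m (by omega)]

lemma alphaHier_rec (d m : ℕ) (hm : 2 ≤ m) :
    alphaHier (d + 2) m = 1 + alphaHier (d + 2) (alphaHier (d + 1) m) := by
  have hf := alphaHier_lt d
  have hl := hf m hm
  obtain ⟨n, rfl⟩ : ∃ n, m = n + 1 := ⟨m - 1, by omega⟩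
  have e : ∀ x, alphaHier (d + 2) x = iterCount (alphaHier (d + 1)) x x := fun x => by
    simp only [alphaHier]
  rw [e, e, iterCount, if_neg (by omega), iterCount_fuel _ hf _ n (by omega)]

lemma alphaHier_le_ackA (d : ℕ) : ∀ j n, alphaHier (d + 1) n ≤ j → n ≤ ackA (d + 1) j := by
  induction d with
  | zero =>
    intro j n h
    have h2 : ∀ j, 2 * j ≤ ackA 1 j := by
      intro j
      induction j with
      | zero => simp
      | succ j ih =>
        have := (ackA_pos_two 1 j).1
        simp only [ackA, Nat.zero_add] at ih this ⊢
        omega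
    simp only [alphaHier] at h
    have := h2 j
    simp only [Nat.zero_add]
    omega
  | succ d ih =>
    intro j
    induction j with
    | zero =>
      intro n h
      by_contra hn
      have h1 := (ackA_pos_two (d + 1 + 1) 0).1
      rw [alphaHier_rec d n (by omega)] at h
      omega
    | succ j ihj =>
      intro n h
      rcases Nat.lt_or_ge n 2 with hn | hn
      · have h1 := (ackA_pos_two (d + 1 + 1) (j + 1)).1
        omega
      · rw [alphaHier_rec d n hn] at h
        have h2 := ihj (alphaHier (d + 1) n) (by
          show alphaHier (d + 2) (alphaHier (d + 1) n) ≤ j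
          omega)
        have h3 := ih _ n h2
        refine h3.trans ?_
        rw [ackA.eq_3 (d + 1) j]
        exact Nat.le_mul_of_pos_left _ (ackA_pos_two _ _).1

lemma alphaHier_pos (d : ℕ) : ∀ m, 2 ≤ m → 1 ≤ alphaHier (d + 1) m := by
  intro m hm
  cases d with
  | zero => simp only [alphaHier]; omega
  | succ d => rw [alphaHier_rec d m hm]; omega

lemma alphaHier_le_sub (d : ℕ) : ∀ m, 4 ≤ m → alphaHier (d + 1) m + 2 ≤ m := by
  induction d with
  | zero => intro m hm; simp only [alphaHier]; omega
  | succ d ih =>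
    intro m hm
    have h1 := ih m hm
    rw [alphaHier_rec d m (by omega)]
    have h2 := alphaHier_pos d m (by omega)
    have h3 : alphaHier (d + 2) (alphaHier (d + 1) m) < alphaHier (d + 1) m :=
      by
        have e : ∀ x, alphaHier (d + 2) x = iterCount (alphaHier (d + 1)) x x := fun x => by
          simp only [alphaHier]
        rw [e]
        exact iterCount_lt _ (alphaHier_lt d) _ _ h2
    omega

lemma exists_alphaHier (m : ℕ) : ∃ k, 1 ≤ k ∧ alphaHier k m ≤ 3 := by
  have h : ∀ d, alphaHier (d + 1) m ≤ 3 ∨ alphaHier (d + 1) m + d ≤ m ∨ ∃ k, 1 ≤ k ∧ alphaHier k m ≤ 3 := by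
    intro d
    induction d with
    | zero =>
      simp only [alphaHier]
      omega
    | succ d ih =>
      rcases ih with h | h | h
      · exact Or.inr (Or.inr ⟨d + 1, by omega, h⟩)
      · rcases Nat.lt_or_ge 3 (alphaHier (d + 1) m) with h4 | h4
        · right
          left
          have hm : 2 ≤ m := by omega
          rw [alphaHier_rec d m hm]
          have := alphaHier_le_sub (d + 1) (alphaHier (d + 1) m) (by omega)
          have e : d + 1 + 1 = d + 2 := rfl
          rw [e] at this
          omega
        · exact Or.inr (Or.inr ⟨d + 1, by omega, h4⟩)
      · exact Or.inr (Or.inr h)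
  rcases h m with h | h | h
  · exact ⟨m + 1, by omega, h⟩
  · exact ⟨m + 1, by omega, by omega⟩
  · exact h

lemma invAck_spec (n : ℕ) : 1 ≤ invAck n ∧ alphaHier (invAck n) n ≤ 3 := by
  have : invAck n ∈ {k : ℕ | 1 ≤ k ∧ alphaHier k n ≤ 3} := Nat.sInf_mem (exists_alphaHier n)
  exact this

lemma le_ackA_invAck (n : ℕ) : n ≤ ackA (invAck n) 3 := by
  obtain ⟨h1, h2⟩ := invAck_spec n
  obtain ⟨d, hd⟩ : ∃ d, invAck n = d + 1 := ⟨invAck n - 1, by omega⟩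
  rw [hd] at h2 ⊢
  exact alphaHier_le_ackA d 3 n h2

/-! ## Growth of the thresholds -/

lemma thQ_mono_u (u i : ℕ) : thQ u i ≤ thQ (u + 1) i := by
  match u, i with
  | 0, _ => simp [thQ]
  | 1, i =>
    have h : 2 + 1 ≤ thQ (1 + 1) i := thQ_ge 2 i
    have h' : thQ 1 i = 2 := by simp only [thQ]
    omega
  | u + 2, 0 => simp [thQ]
  | u + 2, i + 1 => rw [thQ.eq_4 (u + 1) i]; show thQ (u + 2) (i + 1) ≤ 2 * thQ (u + 2) (i + 1) + _; omega

lemma thQ_two (i : ℕ) : thQ 2 i = 3 + 4 * i := by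
  induction i with
  | zero => simp [thQ]
  | succ i ih =>
    have := thQ.eq_4 0 i
    simp only [Nat.zero_add] at this
    rw [this, ih]
    simp only [thQ]
    omega

lemma thQ_three (i : ℕ) : thQ 3 i + 8 * i + 22 = 26 * 2 ^ i := by
  induction i with
  | zero => simp [thQ]
  | succ i ih =>
    have := thQ.eq_4 1 i
    simp only [Nat.reduceAdd] at this
    rw [this, thQ_two, pow_succ]
    simp only [thQ]
    omega

lemma thQ_step (u i : ℕ) : thQ (u + 3) (i + 1) ≤ 8 * (thQ (u + 1) (i + 1) * thQ (u + 3) i) := by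
  have e1 := thQ.eq_4 (u + 1) i
  have e2 : thQ (u + 2) (i + 1) = 2 * thQ (u + 1) (i + 1) + thQ u (i + 1) * thQ (u + 2) i :=
    thQ.eq_4 u i
  have p1 := thQ_ge (u + 3) i
  have m1 := thQ_mono_u u (i + 1)
  have m2 := thQ_mono_u (u + 2) i
  have h1 : thQ (u + 1) (i + 1) ≤ thQ (u + 1) (i + 1) * thQ (u + 3) i :=
    Nat.le_mul_of_pos_right _ (by omega)
  have h2 : thQ u (i + 1) * thQ (u + 2) i ≤ thQ (u + 1) (i + 1) * thQ (u + 3) i :=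
    Nat.mul_le_mul m1 m2
  have e1' : thQ (u + 3) (i + 1) =
    2 * thQ (u + 2) (i + 1) + thQ (u + 1) (i + 1) * thQ (u + 3) i := e1
  omega

lemma choose_succ_ge (n t : ℕ) (h : t ≤ n) : n.choose (t + 1) + 1 ≤ (n + 1).choose (t + 1) := by
  rw [Nat.choose_succ_succ']
  have := Nat.choose_pos h
  omega

lemma thQ_bound (t : ℕ) : ∀ d, thQ (2 * t + 3) d ≤ 2 ^ ((d + 5 * (t + 1)).choose (t + 1)) := by
  induction t with
  | zero =>
    intro d
    have := thQ_three d
    simp only [Nat.mul_zero, Nat.zero_add, Nat.mul_one, Nat.choose_one_right]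
    rw [pow_add]
    omega
  | succ t ih =>
    intro d
    induction d with
    | zero =>
      have e : thQ (2 * (t + 1) + 3) 0 = 2 * (t + 1) + 4 := by
        have := thQ.eq_3 (2 * (t + 1) + 1)
        exact this
      rw [e]
      have h1 := ih 0
      have h2 := thQ_ge (2 * t + 3) 0
      have hmon : (0 + 5 * (t + 1)).choose (t + 1) + 3 ≤ (0 + 5 * (t + 1 + 1)).choose (t + 2) := by
        have z : 0 + 5 * (t + 1 + 1) = 0 + 5 * (t + 1) + 1 + 1 + 1 + 1 + 1 := by ring
        rw [z, Nat.choose_succ_succ' (0 + 5 * (t + 1) + 1 + 1 + 1 + 1) (t + 1)]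
        have y1 := choose_succ_ge (0 + 5 * (t + 1)) t (by omega)
        have y2 := choose_succ_ge (0 + 5 * (t + 1) + 1) t (by omega)
        have y3 := choose_succ_ge (0 + 5 * (t + 1) + 1 + 1) t (by omega)
        have y4 := choose_succ_ge (0 + 5 * (t + 1) + 1 + 1 + 1) t (by omega)
        omega
      calc 2 * (t + 1) + 4 ≤ 2 ^ ((0 + 5 * (t + 1)).choose (t + 1)) * 2 ^ 3 := by omega
        _ = 2 ^ ((0 + 5 * (t + 1)).choose (t + 1) + 3) := by rw [pow_add]
        _ ≤ _ := Nat.pow_le_pow_right (by norm_num) hmon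
    | succ d ihd =>
      have hs := thQ_step (2 * t + 2) d
      have e : 2 * t + 2 + 3 = 2 * (t + 1) + 3 := by ring
      have e' : 2 * t + 2 + 1 = 2 * t + 3 := by ring
      rw [e, e'] at hs
      refine hs.trans ?_
      have hi := ih (d + 1)
      calc 8 * (thQ (2 * t + 3) (d + 1) * thQ (2 * (t + 1) + 3) d)
          ≤ 2 ^ 3 * (2 ^ ((d + 1 + 5 * (t + 1)).choose (t + 1)) *
              2 ^ ((d + 5 * (t + 1 + 1)).choose (t + 1 + 1))) := by
            gcongr
            norm_num
        _ = 2 ^ (3 + (d + 1 + 5 * (t + 1)).choose (t + 1) +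
              (d + 5 * (t + 1 + 1)).choose (t + 1 + 1)) := by
            rw [← pow_add, ← pow_add, ← Nat.add_assoc 3]
        _ ≤ _ := by
            apply Nat.pow_le_pow_right (by norm_num)
            have x1 : d + 1 + 5 * (t + 1 + 1) = (d + 5 * (t + 1 + 1)) + 1 := by ring
            rw [x1, Nat.choose_succ_succ' (d + 5 * (t + 1 + 1)) (t + 1)]
            have y1 := choose_succ_ge (d + 1 + 5 * (t + 1)) t (by omega)
            have y2 := choose_succ_ge (d + 1 + 5 * (t + 1) + 1) t (by omega)
            have y3 := choose_succ_ge (d + 1 + 5 * (t + 1) + 1 + 1) t (by omega)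
            have z : d + 5 * (t + 1 + 1) = d + 1 + 5 * (t + 1) + 1 + 1 + 1 + 1 := by ring
            have y4 := choose_succ_ge (d + 1 + 5 * (t + 1) + 1 + 1 + 1) t (by omega)
            rw [z]
            omega
/-! ## From matrices to families of columns -/

lemma matOnes_le {k n N q : ℕ} (hk : 1 ≤ k) (M : Fin n → Fin n → Bool) (hM : ¬ IsFull (k + 1) M)
    (hb : LinB (k + 1) (k + 1) q n N) : matOnes M ≤ (q + 1) * (N * n + n) := by
  classical
  let S : Fin n → Finset ℕ := fun c =>
    (Finset.univ.filter (fun i : Fin n => M i c = true)).image (Fin.val : Fin n → ℕ)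
  have hScard : ∀ c, (S c).card = (Finset.univ.filter (fun i : Fin n => M i c = true)).card := by
    intro c
    exact Finset.card_image_of_injective _ Fin.val_injective
  have hones : matOnes M = ∑ c, (S c).card := by
    unfold matOnes
    rw [Nat.card_eq_fintype_card, Fintype.card_subtype]
    rw [Finset.card_eq_sum_card_fiberwise (f := Prod.snd) (t := Finset.univ) (by simp)]
    refine Finset.sum_congr rfl (fun c _ => ?_)
    rw [hScard]
    refine Finset.card_bij' (fun p _ => p.1) (fun i _ => (i, c)) ?_ ?_ ?_ ?_
    · intro p hp
      simp only [Finset.mem_filter, Finset.mem_univ, true_and] at hp ⊢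
      rw [← hp.2]
      exact hp.1
    · intro i hi
      simpa using hi
    · intro p hp
      simp only [Finset.mem_filter, Finset.mem_univ, true_and] at hp
      rw [← hp.2]
    · intro i hi
      rfl
  let I : Finset (Fin n × ℕ) := Finset.univ.biUnion
    (fun c : Fin n => (Finset.range ((S c).card / (q + 1))).image (fun i => (c, i)))
  have hImem : ∀ p, p ∈ I ↔ p.2 < (S p.1).card / (q + 1) := by
    rintro ⟨c, i⟩
    simp [I]
  have hIcard : I.card = ∑ c, (S c).card / (q + 1) := by
    rw [Finset.card_biUnion]
    · refine Finset.sum_congr rfl (fun c _ => ?_)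
      rw [Finset.card_image_of_injective _ (fun a b h => (Prod.mk.inj h).2), Finset.card_range]
    · intro c _ c' _ hcc
      rw [Function.onFun, Finset.disjoint_left]
      intro p hp hp'
      obtain ⟨i, _, rfl⟩ := Finset.mem_image.1 hp
      obtain ⟨i', _, h⟩ := Finset.mem_image.1 hp'
      exact hcc (Prod.mk.inj h).1.symm
  let U : Fin n × ℕ → Finset ℕ := fun p =>
    (Finset.Ico (p.2 * (q + 1)) ((p.2 + 1) * (q + 1))).image (Nat.nth (· ∈ S p.1))
  have hidx : ∀ p ∈ I, ∀ x ∈ Finset.Ico (p.2 * (q + 1)) ((p.2 + 1) * (q + 1)),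
      x < (S p.1).card := by
    intro p hp x hx
    have h1 := (hImem p).1 hp
    have h2 : (p.2 + 1) * (q + 1) ≤ (S p.1).card :=
      (Nat.mul_le_mul_right _ h1).trans (Nat.div_mul_le_self _ _)
    have := (Finset.mem_Ico.1 hx).2
    omega
  have hUS : ∀ p ∈ I, U p ⊆ S p.1 := by
    intro p hp x hx
    obtain ⟨y, hy, rfl⟩ := Finset.mem_image.1 hx
    exact Nat.nth_mem y (nth_side (S p.1) y (hidx p hp y hy))
  have hlt : ∀ X : Finset ℕ, ∀ x y, x < y → y < X.card →
      Nat.nth (· ∈ X) x < Nat.nth (· ∈ X) y := by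
    intro X x y hxy hy
    exact Nat.nth_lt_nth' hxy (nth_side X y hy)
  have hUcard : ∀ p ∈ I, q < (U p).card := by
    intro p hp
    rw [Finset.card_image_of_injOn]
    · rw [Nat.card_Ico, Nat.add_mul]
      omega
    · intro x hx y hy hxy
      have hx' := hidx p hp x (Finset.mem_coe.1 hx)
      have hy' := hidx p hp y (Finset.mem_coe.1 hy)
      by_contra hne
      rcases lt_or_gt_of_ne hne with h | h
      · exact absurd hxy (hlt _ _ _ h hy').ne
      · exact absurd hxy (hlt _ _ _ h hx').ne'
  have hNo : NoForm (k + 1) (k + 1) I U := by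
    intro g hg T hT hh
    by_contra hcon
    apply hM
    have hinj : Set.InjOn Prod.fst (T : Set (Fin n × ℕ)) := by
      have key : ∀ p ∈ T, ∀ p' ∈ T, p.1 = p'.1 → ¬ p.2 < p'.2 := by
        intro p hp p' hp' h1 h2
        obtain ⟨x, hx, hgx⟩ := hh p hp 1 (by omega)
        obtain ⟨y, hy, hgy⟩ := hh p' hp' 0 (by omega)
        obtain ⟨x', hx', rfl⟩ := Finset.mem_image.1 hx
        obtain ⟨y', hy', rfl⟩ := Finset.mem_image.1 hy
        have hyc := hidx p' (hT hp') y' hy'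
        have e : x' < y' := by
          have a1 := (Finset.mem_Ico.1 hx').2
          have a2 := (Finset.mem_Ico.1 hy').1
          have a3 : (p.2 + 1) * (q + 1) ≤ p'.2 * (q + 1) := Nat.mul_le_mul_right _ h2
          omega
        have := hlt (S p'.1) x' y' e hyc
        rw [h1] at hgx
        have := hg this.le
        omega
      intro p hp p' hp' h
      have a1 := key p hp p' hp' h
      have a2 := key p' hp' p hp h.symm
      exact Prod.ext h (by omega)
    have hc1 : (T.image Prod.fst).card = T.card := Finset.card_image_of_injOn hinj
    obtain ⟨C, hC, hCc⟩ := Finset.exists_subset_card_eq (s := T.image Prod.fst) (n := k + 1)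
      (by omega)
    refine ⟨C.orderEmbOfFin hCc, (C.orderEmbOfFin hCc).strictMono, ?_⟩
    intro σ
    have hrow : ∀ i : Fin (k + 1), ∃ x : Fin n, g x = i ∧
        M x (C.orderEmbOfFin hCc (σ.symm i)) = true := by
      intro i
      have hm := hC (C.orderEmbOfFin_mem hCc (σ.symm i))
      obtain ⟨p, hp, hpe⟩ := Finset.mem_image.1 hm
      obtain ⟨x, hx, hgx⟩ := hh p hp i i.2
      have hx' := hUS p (hT hp) hx
      obtain ⟨y, hy, rfl⟩ := Finset.mem_image.1 hx'
      refine ⟨y, hgx, ?_⟩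
      rw [← hpe]
      exact (Finset.mem_filter.1 hy).2
    choose ρ hρ1 hρ2 using hrow
    refine ⟨ρ, ?_, ?_⟩
    · intro i i' hii
      by_contra h
      have h' : (ρ i' : ℕ) ≤ ρ i := by
        exact not_lt.1 h
      have := hg h'
      rw [hρ1, hρ1] at this
      exact absurd (Fin.lt_def.1 hii) (by omega)
    · intro b
      have := hρ2 (σ b)
      rwa [Equiv.symm_apply_apply] at this
  have hbound := hb (Fin n × ℕ) I U 0 n le_rfl ?_ hUcard hNo
  · rw [hones]
    have h1 : ∀ c ∈ (Finset.univ : Finset (Fin n)),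
        (S c).card ≤ (q + 1) * ((S c).card / (q + 1)) + (q + 1) := by
      intro c _
      have := Nat.div_add_mod (S c).card (q + 1)
      have := Nat.mod_lt (S c).card (show 0 < q + 1 by omega)
      omega
    have h2 := Finset.sum_le_sum h1
    rw [Finset.sum_add_distrib, ← Finset.mul_sum, ← hIcard, Finset.sum_const, Finset.card_univ,
      Fintype.card_fin, smul_eq_mul] at h2
    have h3 := Nat.mul_le_mul_left (q + 1) hbound
    calc _ ≤ _ := h2
      _ ≤ (q + 1) * (N * n) + n * (q + 1) := Nat.add_le_add_right h3 _
      _ = _ := by ring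
  · intro p hp x hx
    obtain ⟨y, _, rfl⟩ := Finset.mem_image.1 (hUS p hp hx)
    simp

lemma add_pow_bound (c : ℝ) (hc : 0 ≤ c) (t : ℕ) : ∃ D : ℝ, 0 ≤ D ∧ ∀ x : ℝ, 1 ≤ x →
    (x + c) ^ (t + 1) ≤ x ^ (t + 1) + D * x ^ t := by
  induction t with
  | zero => exact ⟨c, hc, fun x _ => by simp⟩
  | succ t ih =>
    obtain ⟨D, hD, h⟩ := ih
    refine ⟨D + c + c * D, by positivity, fun x hx => ?_⟩
    have h1 := h x hx
    have h2 : x ^ t ≤ x ^ (t + 1) := pow_le_pow_right₀ hx (by omega)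
    calc (x + c) ^ (t + 1 + 1) = (x + c) ^ (t + 1) * (x + c) := by ring
      _ ≤ (x ^ (t + 1) + D * x ^ t) * (x + c) := by gcongr
      _ = x ^ (t + 1 + 1) + (D + c) * x ^ (t + 1) + c * D * x ^ t := by ring
      _ ≤ x ^ (t + 1 + 1) + (D + c) * x ^ (t + 1) + c * D * x ^ (t + 1) := by gcongr
      _ = _ := by ring

/-- For every fixed even `k ≥ 4`, with `t = (k−2)/2`, there is a constant
`C_k` such that for every `n ≥ 1`, `p_k(n) ≤ n·2^((1/t!)·α(n)^t + C_k·α(n)^(t−1))`. -/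
theorem pk_even_upper_bound :
    ∀ k : ℕ, 4 ≤ k → k % 2 = 0 → ∃ C : ℝ, ∀ n : ℕ, 1 ≤ n →
      (pFull k n : ℝ) ≤ (n : ℝ) * (2 : ℝ) ^
        ((1 / (Nat.factorial ((k - 2) / 2) : ℝ)) * (invAck n : ℝ) ^ ((k - 2) / 2)
          + C * (invAck n : ℝ) ^ ((k - 2) / 2 - 1)) := by
  intro k hk4 hk2
  obtain ⟨t, rfl⟩ : ∃ t, k = 2 * t + 4 := ⟨(k - 4) / 2, by omega⟩
  have ht : (2 * t + 4 - 2) / 2 = t + 1 := by omega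
  rw [ht, Nat.add_sub_cancel]
  obtain ⟨D, hD, hDb⟩ := add_pow_bound ((5 * (t + 1) : ℕ) : ℝ) (by positivity) t
  set N : ℕ := ((2 * t + 5) * 2 ^ (2 ^ (2 * t + 5))) * 6 ^ (2 * t + 3) * 3 ^ (2 * t + 3) with hN
  obtain ⟨e, he⟩ : ∃ e : ℕ, 2 * (N + 1) ≤ 2 ^ e := ⟨2 * (N + 1), Nat.lt_two_pow_self.le⟩
  refine ⟨D + e, fun n _ => ?_⟩
  set d := invAck n with hd
  have hd1 : (1 : ℝ) ≤ (d : ℝ) := by exact_mod_cast (invAck_spec n).1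
  have hlin : LinB (2 * t + 4 + 1) (2 * t + 4 + 1) (thQ (2 * t + 3) d) n N := by
    have h := linB_main (2 * t + 5) (2 * t + 5) (2 * t + 3) (by omega) d 3 (by norm_num)
    intro ι I S a m hm
    refine h ι I S a m (hm.trans ?_)
    exact (le_ackA_invAck n).trans (Nat.le_self_pow (by omega) _)
  have hp : pFull (2 * t + 4) n ≤ (thQ (2 * t + 3) d + 1) * (N * n + n) := by
    apply csSup_le'
    rintro x ⟨M, hM, rfl⟩
    exact matOnes_le (by omega) M hM hlin
  have hnat : pFull (2 * t + 4) n ≤ n * (2 ^ ((d + 5 * (t + 1)).choose (t + 1)) * 2 ^ e) := by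
    have h1 := thQ_bound t d
    have h2 := thQ_ge (2 * t + 3) d
    calc pFull (2 * t + 4) n ≤ (thQ (2 * t + 3) d + 1) * (N * n + n) := hp
      _ ≤ (2 * thQ (2 * t + 3) d) * (N * n + n) := Nat.mul_le_mul_right _ (by omega)
      _ = n * (thQ (2 * t + 3) d * (2 * (N + 1))) := by ring
      _ ≤ _ := by gcongr
  have hreal : (pFull (2 * t + 4) n : ℝ) ≤
      n * ((2 : ℝ) ^ ((((d + 5 * (t + 1)).choose (t + 1) + e : ℕ)) : ℝ)) := by
    rw [Real.rpow_natCast, pow_add]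
    exact_mod_cast hnat
  refine hreal.trans ?_
  gcongr
  · norm_num
  · push_cast
    have h1 : ((d + 5 * (t + 1)).choose (t + 1) : ℝ) ≤
        ((d + 5 * (t + 1) : ℕ) : ℝ) ^ (t + 1) / ((t + 1).factorial : ℝ) :=
      Nat.choose_le_pow_div (t + 1) _
    have h2 := hDb d hd1
    have hfpos : (1 : ℝ) ≤ ((t + 1).factorial : ℝ) := by
      exact_mod_cast Nat.one_le_iff_ne_zero.2 (Nat.factorial_ne_zero _)
    have h3 : (1 : ℝ) ≤ (d : ℝ) ^ t := one_le_pow₀ hd1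
    have h4 : ((d + 5 * (t + 1) : ℕ) : ℝ) ^ (t + 1) / ((t + 1).factorial : ℝ) ≤
        1 / ((t + 1).factorial : ℝ) * (d : ℝ) ^ (t + 1) + D * (d : ℝ) ^ t := by
      calc ((d + 5 * (t + 1) : ℕ) : ℝ) ^ (t + 1) / ((t + 1).factorial : ℝ)
          ≤ ((d : ℝ) ^ (t + 1) + D * (d : ℝ) ^ t) / ((t + 1).factorial : ℝ) := by
            gcongr
            rw [Nat.cast_add]
            exact h2
        _ = 1 / ((t + 1).factorial : ℝ) * (d : ℝ) ^ (t + 1) +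
            D * (d : ℝ) ^ t / ((t + 1).factorial : ℝ) := by ring
        _ ≤ _ := by
            gcongr
            exact div_le_self (by positivity) hfpos
    have h5 : (e : ℝ) ≤ e * (d : ℝ) ^ t := le_mul_of_one_le_right (by positivity) h3
    calc _ ≤ (1 / ((t + 1).factorial : ℝ) * (d : ℝ) ^ (t + 1) + D * (d : ℝ) ^ t) +
          e * (d : ℝ) ^ t := add_le_add (h1.trans h4) h5
      _ = _ := by ring
end
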